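/- arXiv:1801.00186 — 3 statements merged into one kernel-verified Lean document; each statement's English description precedes it below -/
import Mathlib

section
/- Let L ⊆ ℝ^n be a star set with Borel measurable radial function ρ_L. Then ∫_{S^{n-1}} V_{n-1}(L ∩ w^⊥) d*w = b_{n−1} · ∫_{S^{n-1}} ρ_L(θ)^{n−1} d*θ, the equality holding in [0,∞]. Equivalently, the mean central hyperplane section volume of L equals (b_{n-1}/b_n) times the (n−1)-st dual elementary mixed volume Ṽ_{n-1}(L) = b_n ∫_{S^{n-1}} ρ_L^{n-1} d*θ. (Case k = n−1 of the paper's identity Ṽ_k(L) = (b_n/b_k) ∫_{G_{n,k}} V_k(L ∩ τ₀) d*τ₀.) -/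
open MeasureTheory Metric Real
open scoped ENNReal NNReal

noncomputable section

/-- The normalized (probability) surface measure `d*θ` on the unit sphere of
`EuclideanSpace ℝ (Fin n)`. -/
def sphMeasure (n : ℕ) : Measure (sphere (0 : EuclideanSpace ℝ (Fin n)) 1) :=
  ((volume : Measure (EuclideanSpace ℝ (Fin n))).toSphere Set.univ)⁻¹ •
    (volume : Measure (EuclideanSpace ℝ (Fin n))).toSphere

/-- The hyperplane Radon transform: `Rf(θ,t) = ∫_{θ^⊥} f(tθ + y) dy`, where `θ^⊥` carries its
canonical Lebesgue measure as an (n-1)-dimensional inner product space. -/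
def Radon (n : ℕ) (f : EuclideanSpace ℝ (Fin n) → ℝ≥0∞)
    (θ : sphere (0 : EuclideanSpace ℝ (Fin n)) 1) (t : ℝ) : ℝ≥0∞ :=
  ∫⁻ y : ((ℝ ∙ (θ : EuclideanSpace ℝ (Fin n)))ᗮ),
    f (t • (θ : EuclideanSpace ℝ (Fin n)) + (y : EuclideanSpace ℝ (Fin n)))

/-- `b_m = π^{m/2}/Γ(m/2+1)`, the volume of the m-dimensional unit ball. -/
def ballVol (m : ℕ) : ℝ := Real.pi ^ ((m : ℝ) / 2) / Real.Gamma ((m : ℝ) / 2 + 1)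

/-- The radial function of a star set: `ρ_L(θ) = sup {c ≥ 0 : cθ ∈ L} ∈ [0,∞]`. -/
def radial (n : ℕ) (L : Set (EuclideanSpace ℝ (Fin n)))
    (θ : sphere (0 : EuclideanSpace ℝ (Fin n)) 1) : ℝ≥0∞ :=
  ⨆ r : {r : ℝ≥0 // (r : ℝ) • (θ : EuclideanSpace ℝ (Fin n)) ∈ L}, (r.1 : ℝ≥0∞)

/-!
In polar coordinates the volume of an `m`-dimensional star set is `b_m` times the spherical mean
of `ρ ^ m`, so each section of `L` contributes the mean of `ρ_L ^ (n - 1)` over the unit sphere of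
`w^⊥`, and it remains to see that a uniform point of that sphere, for uniform `w`, is uniform on
`S^{n-1}`.

The uniform law is the only orthogonally invariant probability measure on the unit sphere: the
characteristic function of such a measure is radial, and integrating the characteristic function
of one such measure against another is symmetric in the two. By uniqueness in `w^⊥`, the
normalized projection to `w^⊥` of an independent uniform direction `x` is uniform on the sphere of
`w^⊥`. As a function of `(w, x)` this projection commutes with isometries, so by uniqueness in the
whole space it is uniform on `S^{n-1}`.
-/

section RadialFunction

variable {E : Type*} [AddCommGroup E] [Module ℝ E] {L : Set E} {x : E}

/-- The radial function of a set, `ρ_L(x) = sup {r ≥ 0 : r x ∈ L}`, defined on the whole space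
rather than on the unit sphere so that it restricts to subspaces and is homogeneous of
degree `-1`. -/
def radialFun (L : Set E) (x : E) : ℝ≥0∞ :=
  ⨆ r : {r : ℝ≥0 // (r : ℝ) • x ∈ L}, (r.1 : ℝ≥0∞)

lemma le_radialFun {r : ℝ≥0} (h : (r : ℝ) • x ∈ L) : (r : ℝ≥0∞) ≤ radialFun L x :=
  le_iSup (fun r : {r : ℝ≥0 // (r : ℝ) • x ∈ L} ↦ (r.1 : ℝ≥0∞)) ⟨r, h⟩

lemma smul_mem_of_lt_radialFun (hL : StarConvex ℝ 0 L) {r : ℝ≥0} (h : r < radialFun L x) :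
    (r : ℝ) • x ∈ L := by
  obtain ⟨⟨s, hs⟩, hrs⟩ := lt_iSup_iff.1 h
  have hrs : (r : ℝ) < s := by exact_mod_cast hrs
  have hs0 : (0 : ℝ) < s := r.coe_nonneg.trans_lt hrs
  have := starConvex_zero_iff.1 hL hs (div_nonneg r.coe_nonneg s.coe_nonneg)
    ((div_le_one hs0).2 hrs.le)
  rwa [smul_smul, div_mul_cancel₀ _ hs0.ne'] at this

lemma radialFun_smul {c : ℝ} (hc : 0 < c) (L : Set E) (x : E) :
    radialFun L (c • x) = radialFun L x / ENNReal.ofReal c := by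
  have smul_le {a : ℝ} (ha : 0 < a) (y : E) :
      radialFun L (a • y) * ENNReal.ofReal a ≤ radialFun L y := by
    rw [radialFun, ENNReal.iSup_mul]
    refine iSup_le fun ⟨r, hr⟩ ↦ ?_
    rw [ENNReal.ofReal, ← ENNReal.coe_mul]
    exact le_radialFun (by rwa [NNReal.coe_mul, coe_toNNReal a ha.le, mul_smul])
  have hc0 : ENNReal.ofReal c ≠ 0 := by simpa
  refine le_antisymm ((ENNReal.le_div_iff_mul_le (.inl hc0) (.inl ENNReal.ofReal_ne_top)).2
    (smul_le hc x)) ?_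
  simpa only [inv_smul_smul₀ hc.ne', ENNReal.ofReal_inv_of_pos hc, div_eq_mul_inv]
    using smul_le (inv_pos.2 hc) (c • x)

lemma one_lt_radialFun_smul_iff {r : ℝ} (hr : 0 < r) :
    1 < radialFun L (r • x) ↔ ENNReal.ofReal r < radialFun L x := by
  rw [radialFun_smul hr, ENNReal.lt_div_iff_mul_lt (.inl (by simpa)) (.inl ENNReal.ofReal_ne_top),
    one_mul]

lemma one_le_radialFun_smul_iff {r : ℝ} (hr : 0 < r) :
    1 ≤ radialFun L (r • x) ↔ ENNReal.ofReal r ≤ radialFun L x := by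
  rw [radialFun_smul hr, ENNReal.le_div_iff_mul_le (.inl (by simpa)) (.inl ENNReal.ofReal_ne_top),
    one_mul]

lemma measurable_radialFun {E : Type*} [NormedAddCommGroup E] [NormedSpace ℝ E]
    [FiniteDimensional ℝ E] [MeasurableSpace E] [BorelSpace E] {L : Set E}
    (hρ : Measurable fun θ : sphere (0 : E) 1 ↦ radialFun L θ) :
    Measurable (radialFun L) := by
  have polar (x : ({0}ᶜ : Set E)) : radialFun L x =
      radialFun L (homeomorphUnitSphereProd E x).1 / ENNReal.ofReal ‖(x : E)‖ := by
    have hx : 0 < ‖(x : E)‖ := norm_pos_iff.2 x.2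
    rw [← radialFun_smul hx, homeomorphUnitSphereProd_apply_fst_coe, smul_inv_smul₀ hx.ne']
  have hdir : Measurable fun x : ({0}ᶜ : Set E) ↦ (homeomorphUnitSphereProd E x).1 :=
    measurable_fst.comp (homeomorphUnitSphereProd E).measurable
  have hcompl : Measurable fun x : ({0}ᶜ : Set E) ↦ radialFun L x := by
    simp only [polar]
    exact (hρ.comp hdir).div (by fun_prop)
  exact measurable_of_measurable_on_compl_singleton 0 hcompl

end RadialFunction

section PolarCoordinates

lemma volumeIoiPow_univ (n : ℕ) : Measure.volumeIoiPow n Set.univ = ∞ := by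
  refine ENNReal.eq_top_of_forall_nnreal_le fun c ↦ ?_
  have hx : (1 : ℝ) ≤ c * (n + 1) + 1 := le_add_of_nonneg_left (by positivity)
  calc (c : ℝ≥0∞) = ENNReal.ofReal c := (ENNReal.ofReal_coe_nnreal).symm
    _ ≤ ENNReal.ofReal ((c * (n + 1) + 1) ^ (n + 1) / (n + 1)) := by
      refine ENNReal.ofReal_le_ofReal ((le_div_iff₀ (by positivity)).2 ?_)
      exact (le_add_of_nonneg_right zero_le_one).trans (le_self_pow₀ hx n.succ_ne_zero)
    _ = Measure.volumeIoiPow n (Set.Iio ⟨c * (n + 1) + 1, Set.mem_Ioi.2 (one_pos.trans_le hx)⟩) :=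
      (Measure.volumeIoiPow_apply_Iio n ⟨_, _⟩).symm
    _ ≤ Measure.volumeIoiPow n Set.univ := measure_mono (Set.subset_univ _)

lemma volumeIoiPow_setOf_ofReal_lt (n : ℕ) (c : ℝ≥0∞) :
    Measure.volumeIoiPow n {r | ENNReal.ofReal r < c} = c ^ (n + 1) / (n + 1) := by
  induction c with
  | top => simp [volumeIoiPow_univ, ENNReal.top_div]
  | coe c =>
    obtain rfl | hc := eq_zero_or_pos c
    · simp
    have hIio : {r : Set.Ioi (0 : ℝ) | ENNReal.ofReal r < c} =
        Set.Iio ⟨c, Set.mem_Ioi.2 (NNReal.coe_pos.2 hc)⟩ := by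
      ext r
      simp [← ENNReal.ofReal_coe_nnreal, ENNReal.ofReal_lt_ofReal_iff, hc, ← Subtype.coe_lt_coe]
    rw [hIio, Measure.volumeIoiPow_apply_Iio, ENNReal.ofReal_div_of_pos (by positivity),
      ENNReal.ofReal_pow c.coe_nonneg, ENNReal.ofReal_coe_nnreal]
    norm_cast

lemma volumeIoiPow_setOf_ofReal_le (n : ℕ) (c : ℝ≥0∞) :
    Measure.volumeIoiPow n {r | ENNReal.ofReal r ≤ c} = c ^ (n + 1) / (n + 1) := by
  have null_eq : Measure.volumeIoiPow n {r | ENNReal.ofReal r = c} = 0 := by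
    refine withDensity_absolutelyContinuous _ _ ?_
    rw [comap_subtype_coe_apply measurableSet_Ioi]
    refine Set.Subsingleton.measure_zero (Set.Subsingleton.image (fun r hr s hs ↦ ?_) _) _
    exact Subtype.ext ((ENNReal.ofReal_eq_ofReal_iff (Set.mem_Ioi.1 r.2).le
      (Set.mem_Ioi.1 s.2).le).1 (hr.trans hs.symm))
  rw [← volumeIoiPow_setOf_ofReal_lt]
  simp only [le_iff_lt_or_eq, Set.ofPred_or]
  exact measure_congr (union_ae_eq_left_of_ae_eq_empty (ae_eq_empty.2 null_eq))

variable {E : Type*} [NormedAddCommGroup E] [NormedSpace ℝ E] [FiniteDimensional ℝ E]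
  [Nontrivial E] [MeasurableSpace E] [BorelSpace E] (μ : Measure E) [μ.IsAddHaarMeasure]

lemma addHaar_eq_lintegral_toSphere {s : Set E} (hs : MeasurableSet s) :
    μ s = ∫⁻ u : sphere (0 : E) 1,
      Measure.volumeIoiPow (Module.finrank ℝ E - 1) {r | (r : ℝ) • (u : E) ∈ s} ∂μ.toSphere := by
  have hmp := μ.measurePreserving_homeomorphUnitSphereProd.symm
    (homeomorphUnitSphereProd E).toMeasurableEquiv
  have hs' : MeasurableSet ((↑) ⁻¹' s : Set ({0}ᶜ : Set E)) := measurable_subtype_coe hs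
  calc μ s = μ.comap ((↑) : ({0}ᶜ : Set E) → E) ((↑) ⁻¹' s) := by
        rw [comap_subtype_coe_apply (measurableSet_singleton _).compl, Subtype.image_preimage_coe,
          Set.inter_comm, ← Set.sdiff_eq, measure_sdiff_null (measure_singleton _)]
    _ = _ := by
        rw [← hmp.measure_preimage hs'.nullMeasurableSet,
          Measure.prod_apply (hmp.measurable hs')]
        rfl

-- `L` lies between the measurable sets `{1 < ρ_L}` and `{1 ≤ ρ_L}`, which meet each ray from the
-- origin in intervals differing by at most an endpoint.
theorem addHaar_eq_lintegral_radialFun {L : Set E} (hL : StarConvex ℝ 0 L)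
    (hρ : Measurable fun θ : sphere (0 : E) 1 ↦ radialFun L θ) :
    μ L = ∫⁻ u : sphere (0 : E) 1,
      radialFun L u ^ Module.finrank ℝ E / Module.finrank ℝ E ∂μ.toSphere := by
  obtain ⟨n, hn⟩ := Nat.exists_eq_succ_of_ne_zero (Module.finrank_pos (R := ℝ) (M := E)).ne'
  have hρ := measurable_radialFun hρ
  simp only [hn, Nat.cast_succ]
  refine le_antisymm ?_ ?_
  · calc
      μ L ≤ μ {x | 1 ≤ radialFun L x} :=
        measure_mono fun x hx ↦ le_radialFun (r := 1) (by simpa using hx)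
      _ = _ := by
        rw [addHaar_eq_lintegral_toSphere μ (measurableSet_le measurable_const hρ), hn]
        refine lintegral_congr fun u ↦ ?_
        simp only [Set.mem_ofPred_eq, one_le_radialFun_smul_iff (Set.mem_Ioi.1 (Subtype.prop _)),
          Nat.succ_sub_one, volumeIoiPow_setOf_ofReal_le]
  · calc
      _ = μ {x | 1 < radialFun L x} := by
        rw [addHaar_eq_lintegral_toSphere μ (measurableSet_lt measurable_const hρ), hn]
        refine lintegral_congr fun u ↦ ?_
        simp only [Set.mem_ofPred_eq, one_lt_radialFun_smul_iff (Set.mem_Ioi.1 (Subtype.prop _)),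
          Nat.succ_sub_one, volumeIoiPow_setOf_ofReal_lt]
      _ ≤ μ L := measure_mono fun x hx ↦ by simpa using smul_mem_of_lt_radialFun (r := 1) hL hx

end PolarCoordinates

section OrthogonallyInvariant

variable {E : Type*} [NormedAddCommGroup E] [InnerProductSpace ℝ E] [MeasurableSpace E]

/-- Invariance of a measure under all linear isometries of the space, the property which
characterizes the uniform measure on the unit sphere. -/
def OrthogonallyInvariant (μ : Measure E) : Prop :=
  ∀ T : E ≃ₗᵢ[ℝ] E, MeasurePreserving T μ μ

variable [BorelSpace E]

lemma orthogonallyInvariant_map {X : Type*} [MeasurableSpace X] {ν : Measure X}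
    {F : X → E} (hF : Measurable F)
    (hequiv : ∀ T : E ≃ₗᵢ[ℝ] E, ∃ S : X → X, MeasurePreserving S ν ν ∧ ∀ x, F (S x) = T (F x)) :
    OrthogonallyInvariant (ν.map F) := by
  intro T
  obtain ⟨S, hS, hFS⟩ := hequiv T
  have hT : Measurable T := T.continuous.measurable
  refine ⟨hT, ?_⟩
  calc (ν.map F).map T = ν.map (F ∘ S) := by
        rw [Measure.map_map hT hF, show T ∘ F = F ∘ S from funext fun x ↦ (hFS x).symm]
    _ = ν.map F := by rw [← Measure.map_map hF hS.measurable, hS.map_eq]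

lemma OrthogonallyInvariant.charFun_eq_of_norm_eq {μ : Measure E}
    (hμ : OrthogonallyInvariant μ) {s t : E} (h : ‖s‖ = ‖t‖) : charFun μ s = charFun μ t := by
  obtain ⟨T, rfl⟩ : ∃ T : E ≃ₗᵢ[ℝ] E, T s = t := ⟨_, Submodule.reflection_sub h⟩
  simp only [charFun_apply, ← (hμ T).integral_comp T.toHomeomorph.measurableEmbedding
    (fun x ↦ Complex.exp (inner ℝ x (T s) * Complex.I)), T.inner_map_map]

lemma OrthogonallyInvariant.charFun_eq_integral {μ ν : Measure E} [IsProbabilityMeasure ν]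
    (hμ : OrthogonallyInvariant μ) (hν : ∀ᵐ x ∂ν, ‖x‖ = 1) (t : E) :
    charFun μ t = ∫ x, charFun μ (‖t‖ • x) ∂ν := by
  have hconst : ∀ᵐ x ∂ν, charFun μ (‖t‖ • x) = charFun μ t := by
    filter_upwards [hν] with x hx
    exact hμ.charFun_eq_of_norm_eq (by simp [norm_smul, hx])
  simp [integral_congr_ae hconst]

variable [SecondCountableTopology E]

lemma integral_charFun_smul_swap (μ ν : Measure E) [IsFiniteMeasure μ] [IsFiniteMeasure ν] (c : ℝ) :
    ∫ x, charFun μ (c • x) ∂ν = ∫ x, charFun ν (c • x) ∂μ := by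
  change ∫ x, ∫ y, Complex.exp (inner ℝ y (c • x) * Complex.I) ∂μ ∂ν =
    ∫ y, ∫ x, Complex.exp (inner ℝ x (c • y) * Complex.I) ∂ν ∂μ
  rw [integral_integral_swap]
  · simp only [inner_smul_right, real_inner_comm]
  · refine (integrable_const (1 : ℝ)).mono' ?_ (.of_forall fun p ↦ ?_)
    · exact Continuous.aestronglyMeasurable (by unfold Function.uncurry; fun_prop)
    · exact (Complex.norm_exp_ofReal_mul_I _).le

theorem OrthogonallyInvariant.eq_of_ae_norm_eq_one [CompleteSpace E] {μ ν : Measure E}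
    [IsProbabilityMeasure μ] [IsProbabilityMeasure ν] (hμ : OrthogonallyInvariant μ)
    (hν : OrthogonallyInvariant ν) (hμ1 : ∀ᵐ x ∂μ, ‖x‖ = 1) (hν1 : ∀ᵐ x ∂ν, ‖x‖ = 1) : μ = ν := by
  refine Measure.ext_of_charFun (funext fun t ↦ ?_)
  rw [hμ.charFun_eq_integral hν1, hν.charFun_eq_integral hμ1, integral_charFun_smul_swap]

end OrthogonallyInvariant

section UniformMeasure

lemma measurableEmbedding_coe_sphere {E : Type*} [NormedAddCommGroup E] [MeasurableSpace E]
    [BorelSpace E] : MeasurableEmbedding ((↑) : sphere (0 : E) 1 → E) :=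
  .subtype_coe isClosed_sphere.measurableSet

open scoped Pointwise

variable (E : Type*) [NormedAddCommGroup E] [InnerProductSpace ℝ E] [FiniteDimensional ℝ E]
  [MeasurableSpace E] [BorelSpace E]

/-- The normalized surface measure on the unit sphere. -/
def sphereProb : Measure (sphere (0 : E) 1) :=
  ((volume : Measure E).toSphere Set.univ)⁻¹ • (volume : Measure E).toSphere

/-- The normalized surface measure of the unit sphere as a measure on the ambient space, where
it can be pushed forward along isometries and projections. -/
def sphereLaw : Measure E :=
  (sphereProb E).map (↑)

variable {E}

lemma sphereLaw_apply {A : Set E} (hA : MeasurableSet A) :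
    sphereLaw E A = ((volume : Measure E).toSphere Set.univ)⁻¹ *
      (Module.finrank ℝ E * volume (Set.Ioo (0 : ℝ) 1 • (sphere (0 : E) 1 ∩ A))) := by
  rw [sphereLaw, measurableEmbedding_coe_sphere.map_apply, sphereProb, Measure.smul_apply,
    Measure.toSphere_apply' _ (measurable_subtype_coe hA), Subtype.image_preimage_coe, smul_eq_mul]

lemma ae_norm_eq_one_sphereLaw : ∀ᵐ x ∂sphereLaw E, ‖x‖ = 1 :=
  measurableEmbedding_coe_sphere.ae_map_iff.2 (.of_forall norm_eq_of_mem_sphere)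

instance isProbabilityMeasure_sphereProb [Nontrivial E] : IsProbabilityMeasure (sphereProb E) :=
  ⟨ENNReal.inv_mul_cancel (by simp [-Measure.toSphere_apply_univ]) (measure_ne_top _ _)⟩

instance isProbabilityMeasure_sphereLaw [Nontrivial E] : IsProbabilityMeasure (sphereLaw E) :=
  Measure.isProbabilityMeasure_map measurable_subtype_coe.aemeasurable

lemma orthogonallyInvariant_sphereLaw : OrthogonallyInvariant (sphereLaw E) := by
  intro T
  have hT : MeasurableEmbedding T := T.toHomeomorph.measurableEmbedding
  refine ⟨hT.measurable, Measure.ext fun A hA ↦ ?_⟩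
  have hcone : Set.Ioo (0 : ℝ) 1 • (sphere (0 : E) 1 ∩ T ⁻¹' A) =
      T ⁻¹' (Set.Ioo (0 : ℝ) 1 • (sphere (0 : E) 1 ∩ A)) := by
    ext x
    constructor
    · rintro ⟨r, hr, y, ⟨hy, hyA⟩, rfl⟩
      exact ⟨r, hr, T y, ⟨by simpa using hy, hyA⟩, (map_smul T r y).symm⟩
    · rintro ⟨r, hr, y, ⟨hy, hyA⟩, hx : r • y = T x⟩
      exact ⟨r, hr, T.symm y, ⟨by simpa using hy, by simpa using hyA⟩, by simp [← map_smul, hx]⟩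
  rw [hT.map_apply, sphereLaw_apply (hT.measurable hA), sphereLaw_apply hA, hcone,
    T.measurePreserving.measure_preimage_emb hT]

lemma ae_notMem_sphereLaw {S : Submodule ℝ E} (hS : S ≠ ⊤) : ∀ᵐ x ∂sphereLaw E, x ∉ S := by
  have hcone : Set.Ioo (0 : ℝ) 1 • (sphere (0 : E) 1 ∩ S) ⊆ (S : Set E) := by
    rintro _ ⟨r, -, x, hx, rfl⟩
    exact S.smul_mem r hx.2
  have hnull := measure_mono_null hcone (Measure.addHaar_submodule volume S hS)
  change sphereLaw E {x | ¬ x ∉ S} = 0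
  simpa [hnull] using sphereLaw_apply (A := (S : Set E)) S.closed_of_finiteDimensional.measurableSet

lemma lintegral_sphereLaw (f : E → ℝ≥0∞) :
    ∫⁻ x, f x ∂sphereLaw E = ∫⁻ θ, f θ ∂sphereProb E :=
  measurableEmbedding_coe_sphere.lintegral_map f

lemma volume_ball_eq_ballVol [Nontrivial E] :
    volume (ball (0 : E) 1) = ENNReal.ofReal (ballVol (Module.finrank ℝ E)) := by
  rw [InnerProductSpace.volume_ball, ballVol, ENNReal.ofReal_one, one_pow, one_mul,
    Real.sqrt_eq_rpow, ← Real.rpow_natCast, ← Real.rpow_mul Real.pi_nonneg, one_div_mul_eq_div]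

theorem volume_eq_lintegral_radialFun [Nontrivial E] {L : Set E} (hL : StarConvex ℝ 0 L)
    (hρ : Measurable fun θ : sphere (0 : E) 1 ↦ radialFun L θ) :
    volume L = ENNReal.ofReal (ballVol (Module.finrank ℝ E)) *
      ∫⁻ θ, radialFun L θ ^ Module.finrank ℝ E ∂sphereProb E := by
  have hdim : (Module.finrank ℝ E : ℝ≥0∞) ≠ 0 := by exact_mod_cast Module.finrank_pos.ne'
  have hb : volume (ball (0 : E) 1) ≠ 0 := (measure_ball_pos _ _ one_pos).ne'
  rw [addHaar_eq_lintegral_radialFun volume hL hρ, sphereProb, lintegral_smul_measure,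
    Measure.toSphere_apply_univ, ← volume_ball_eq_ballVol, smul_eq_mul, ← mul_assoc]
  simp only [div_eq_mul_inv]
  rw [lintegral_mul_const _ (hρ.pow_const _), mul_comm,
    ENNReal.mul_inv (.inl hdim) (.inr hb), mul_left_comm,
    ENNReal.mul_inv_cancel hb measure_ball_lt_top.ne, mul_one]

end UniformMeasure

section Projection

lemma normalize_map {V W : Type*} [NormedAddCommGroup V] [NormedSpace ℝ V]
    [NormedAddCommGroup W] [NormedSpace ℝ W] (T : V ≃ₗᵢ[ℝ] W) (x : V) :
    NormedSpace.normalize (T x) = T (NormedSpace.normalize x) := by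
  simp only [NormedSpace.normalize, T.norm_map, map_smul]

lemma measurable_normalize {V : Type*} [NormedAddCommGroup V] [NormedSpace ℝ V]
    [SecondCountableTopology V] [MeasurableSpace V] [BorelSpace V] :
    Measurable (NormedSpace.normalize : V → V) := by
  unfold NormedSpace.normalize
  fun_prop

variable {E : Type*} [NormedAddCommGroup E] [InnerProductSpace ℝ E]

/-- The normalized projection of `x` onto the hyperplane orthogonal to `w`. -/
def hyperplaneDir (w x : E) : E :=
  NormedSpace.normalize ((ℝ ∙ w)ᗮ.starProjection x)

lemma hyperplaneDir_map (T : E ≃ₗᵢ[ℝ] E) (w x : E) :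
    hyperplaneDir (T w) (T x) = T (hyperplaneDir w x) := by
  simp only [hyperplaneDir, ← normalize_map, Submodule.starProjection_orthogonal_val,
    Submodule.starProjection_singleton, T.inner_map_map, T.norm_map, map_sub, map_smul]

lemma measurable_hyperplaneDir [SecondCountableTopology E] [MeasurableSpace E] [BorelSpace E] :
    Measurable fun p : E × E ↦ hyperplaneDir p.1 p.2 := by
  refine measurable_normalize.comp ?_
  simp only [Submodule.starProjection_orthogonal_val, Submodule.starProjection_singleton,
    RCLike.ofReal_real_eq_id, id]
  fun_prop

variable [FiniteDimensional ℝ E]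

lemma exists_linearIsometryEquiv_projection_comm (S : Submodule ℝ E) (T : S ≃ₗᵢ[ℝ] S) :
    ∃ T' : E ≃ₗᵢ[ℝ] E, ∀ x,
      S.orthogonalProjectionOnto (T' x) = T (S.orthogonalProjectionOnto x) := by
  let T' : E ≃ₗᵢ[ℝ] E :=
    (S.subtypeₗᵢ.comp T.toLinearIsometry).extend.toLinearIsometryEquiv rfl
  have hT' (s : S) : T' s = T s := LinearIsometry.extend_apply _ s
  refine ⟨T', fun x ↦ Subtype.ext ?_⟩
  rw [← hT']
  refine Submodule.eq_starProjection_of_mem_of_inner_eq_zero (hT' _ ▸ Subtype.prop _) fun y hy ↦ ?_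
  have hy' : T' (T.symm ⟨y, hy⟩) = y := by rw [hT', T.apply_symm_apply]
  rw [← hy', ← map_sub, T'.inner_map_map]
  exact Submodule.starProjection_inner_eq_zero x _ (Subtype.prop _)

variable [MeasurableSpace E] [BorelSpace E]

lemma measurable_normalize_projection (S : Submodule ℝ E) :
    Measurable fun x ↦ NormedSpace.normalize (S.orthogonalProjectionOnto x) :=
  measurable_normalize.comp (by fun_prop)

theorem map_normalize_projection_sphereLaw (S : Submodule ℝ E) [Nontrivial S] :
    (sphereLaw E).map (fun x ↦ NormedSpace.normalize (S.orthogonalProjectionOnto x)) =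
      sphereLaw S := by
  have : Nontrivial E := S.subtype_injective.nontrivial
  have hmeas := measurable_normalize_projection S
  have := Measure.isProbabilityMeasure_map (μ := sphereLaw E) hmeas.aemeasurable
  refine OrthogonallyInvariant.eq_of_ae_norm_eq_one (orthogonallyInvariant_map hmeas fun T ↦ ?_)
    orthogonallyInvariant_sphereLaw ?_ ae_norm_eq_one_sphereLaw
  · obtain ⟨T', hT'⟩ := exists_linearIsometryEquiv_projection_comm S T
    exact ⟨T', orthogonallyInvariant_sphereLaw T', fun x ↦ by rw [hT', normalize_map]⟩
  · have hS : Sᗮ ≠ ⊤ := by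
      rwa [Ne, Submodule.orthogonal_eq_top_iff, ← Ne, ← Submodule.nontrivial_iff_ne_bot]
    rw [ae_map_iff hmeas.aemeasurable (measurableSet_eq_fun (by fun_prop) (by fun_prop))]
    filter_upwards [ae_notMem_sphereLaw hS] with x hx
    rwa [NormedSpace.norm_normalize_eq_one_iff, Ne, Submodule.orthogonalProjectionOnto_eq_zero_iff]

theorem map_hyperplaneDir_sphereLaw (hE : 2 ≤ Module.finrank ℝ E) :
    ((sphereLaw E).prod (sphereLaw E)).map (fun p ↦ hyperplaneDir p.1 p.2) = sphereLaw E := by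
  have : Nontrivial E := Module.nontrivial_of_finrank_pos (R := ℝ) (by omega)
  have := Measure.isProbabilityMeasure_map (μ := (sphereLaw E).prod (sphereLaw E))
    (measurable_hyperplaneDir (E := E)).aemeasurable
  refine OrthogonallyInvariant.eq_of_ae_norm_eq_one
    (orthogonallyInvariant_map measurable_hyperplaneDir fun T ↦ ?_)
    orthogonallyInvariant_sphereLaw ?_ ae_norm_eq_one_sphereLaw
  · have hT := orthogonallyInvariant_sphereLaw T
    exact ⟨Prod.map T T, hT.prod hT, fun p ↦ hyperplaneDir_map T p.1 p.2⟩
  · have hmeas : MeasurableSet {p : E × E | ‖hyperplaneDir p.1 p.2‖ = 1} :=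
      measurableSet_eq_fun measurable_hyperplaneDir.norm measurable_const
    rw [ae_map_iff measurable_hyperplaneDir.aemeasurable
      (measurableSet_eq_fun (by fun_prop) (by fun_prop)), Measure.ae_prod_iff_ae_ae hmeas]
    refine .of_forall fun w ↦ ?_
    have hw : ℝ ∙ w ≠ ⊤ := by
      intro h
      have hle := finrank_span_le_card (R := ℝ) {w}
      rw [h, finrank_top, Set.toFinset_singleton, Finset.card_singleton] at hle
      omega
    filter_upwards [ae_notMem_sphereLaw hw] with x hx
    rwa [hyperplaneDir, NormedSpace.norm_normalize_eq_one_iff, Ne,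
      Submodule.starProjection_apply_eq_zero_iff, Submodule.orthogonal_orthogonal]

end Projection

section Sections

variable {E : Type*} [NormedAddCommGroup E] [InnerProductSpace ℝ E]

lemma finrank_orthogonal_sphere (hE : 0 < Module.finrank ℝ E) (w : sphere (0 : E) 1) :
    Module.finrank ℝ (ℝ ∙ (w : E))ᗮ = Module.finrank ℝ E - 1 := by
  have : Fact (Module.finrank ℝ E = Module.finrank ℝ E - 1 + 1) :=
    ⟨(Nat.sub_add_cancel hE).symm⟩
  exact Submodule.finrank_orthogonal_span_singleton (ne_zero_of_mem_unit_sphere w)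

lemma nontrivial_orthogonal_sphere (hE : 2 ≤ Module.finrank ℝ E) (w : sphere (0 : E) 1) :
    Nontrivial (ℝ ∙ (w : E))ᗮ :=
  Module.nontrivial_of_finrank_pos (R := ℝ) (by rw [finrank_orthogonal_sphere (by omega)]; omega)

variable [FiniteDimensional ℝ E] [MeasurableSpace E] [BorelSpace E]

theorem lintegral_lintegral_orthogonal_sphereProb (hE : 2 ≤ Module.finrank ℝ E) {f : E → ℝ≥0∞}
    (hf : Measurable f) :
    ∫⁻ w : sphere (0 : E) 1, ∫⁻ y : sphere (0 : (ℝ ∙ (w : E))ᗮ) 1, f (y : (ℝ ∙ (w : E))ᗮ)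
      ∂sphereProb (ℝ ∙ (w : E))ᗮ ∂sphereProb E = ∫⁻ x : sphere (0 : E) 1, f x ∂sphereProb E := by
  have inner_eq (w : sphere (0 : E) 1) :
      ∫⁻ y : sphere (0 : (ℝ ∙ (w : E))ᗮ) 1, f (y : (ℝ ∙ (w : E))ᗮ) ∂sphereProb (ℝ ∙ (w : E))ᗮ =
        ∫⁻ x, f (hyperplaneDir w x) ∂sphereLaw E := by
    have := nontrivial_orthogonal_sphere hE w
    rw [← lintegral_sphereLaw fun y : (ℝ ∙ (w : E))ᗮ ↦ f y, ← map_normalize_projection_sphereLaw,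
      lintegral_map (by fun_prop) (measurable_normalize_projection _)]
    rfl
  have : Nontrivial E := Module.nontrivial_of_finrank_pos (R := ℝ) (by omega)
  have hmeas : Measurable fun p : E × E ↦ f (hyperplaneDir p.1 p.2) :=
    hf.comp measurable_hyperplaneDir
  simp only [inner_eq]
  rw [← lintegral_sphereLaw fun w ↦ ∫⁻ x, f (hyperplaneDir w x) ∂sphereLaw E,
    ← lintegral_prod _ hmeas.aemeasurable, ← lintegral_map hf measurable_hyperplaneDir,
    map_hyperplaneDir_sphereLaw hE, lintegral_sphereLaw]

lemma volume_orthogonal_section (hE : 2 ≤ Module.finrank ℝ E) {L : Set E} (hL : StarConvex ℝ 0 L)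
    (hρ : Measurable (radialFun L)) (w : sphere (0 : E) 1) :
    volume {y : (ℝ ∙ (w : E))ᗮ | (y : E) ∈ L} =
      ENNReal.ofReal (ballVol (Module.finrank ℝ E - 1)) *
        ∫⁻ θ : sphere (0 : (ℝ ∙ (w : E))ᗮ) 1,
          radialFun L (θ : (ℝ ∙ (w : E))ᗮ) ^ (Module.finrank ℝ E - 1)
          ∂sphereProb (ℝ ∙ (w : E))ᗮ := by
  have := nontrivial_orthogonal_sphere hE w
  have hstar : StarConvex ℝ 0 {y : (ℝ ∙ (w : E))ᗮ | (y : E) ∈ L} :=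
    starConvex_zero_iff.2 fun y hy a ha0 ha1 ↦ starConvex_zero_iff.1 hL hy ha0 ha1
  rw [← finrank_orthogonal_sphere (by omega) w]
  exact volume_eq_lintegral_radialFun hstar
    (hρ.comp (measurable_subtype_coe.comp measurable_subtype_coe))

end Sections

theorem stmt17_general {E : Type*} [NormedAddCommGroup E] [InnerProductSpace ℝ E]
    [FiniteDimensional ℝ E] [MeasurableSpace E] [BorelSpace E] (hE : 2 ≤ Module.finrank ℝ E)
    {L : Set E} (hL : StarConvex ℝ 0 L)
    (hρ : Measurable fun θ : sphere (0 : E) 1 ↦ radialFun L θ) :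
    ∫⁻ w, volume {y : (ℝ ∙ (w : E))ᗮ | (y : E) ∈ L} ∂sphereProb E =
      ENNReal.ofReal (ballVol (Module.finrank ℝ E - 1)) *
        ∫⁻ θ, radialFun L θ ^ ((Module.finrank ℝ E : ℝ) - 1) ∂sphereProb E := by
  have hρ := measurable_radialFun hρ
  simp only [volume_orthogonal_section hE hL hρ]
  rw [lintegral_const_mul' _ _ ENNReal.ofReal_ne_top,
    lintegral_lintegral_orthogonal_sphereProb hE (hρ.pow_const _)]
  simp only [← ENNReal.rpow_natCast, Nat.cast_pred (zero_lt_two.trans_le hE)]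

/-- The mean central hyperplane section volume of a star set equals
`b_{n-1} ∫_{S^{n-1}} ρ_L(θ)^{n-1} d*θ` (case `k = n-1` of
`Ṽ_k(L) = (b_n/b_k) ∫_{G_{n,k}} V_k(L ∩ τ₀) d*τ₀`). -/
theorem stmt17 (n : ℕ) (hn : 2 ≤ n) (L : Set (EuclideanSpace ℝ (Fin n)))
    (hL : MeasurableSet L)
    (hstar : ∀ x ∈ L, ∀ lam : ℝ, 0 ≤ lam → lam ≤ 1 → lam • x ∈ L)
    (hρ : Measurable (radial n L)) :
    (∫⁻ w, volume {y : ((ℝ ∙ (w : EuclideanSpace ℝ (Fin n)))ᗮ) |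
        (y : EuclideanSpace ℝ (Fin n)) ∈ L} ∂(sphMeasure n)) =
      ENNReal.ofReal (ballVol (n - 1)) *
        ∫⁻ θ, radial n L θ ^ ((n : ℝ) - 1) ∂(sphMeasure n) := by
  have h := stmt17_general (by simpa using hn) (starConvex_zero_iff.2 fun x hx a ↦ hstar x hx a) hρ
  rwa [finrank_euclideanSpace_fin] at h
end
end

section
/- Identify ℝ^{n+1} = ℝ^n ⊕ ℝe_{n+1} and regard S^{n-1}, the unit sphere of ℝ^n, as the equator of the unit sphere S^n of ℝ^{n+1}. Then for every measurable function g : S^n → [0,∞], ∫_{S^n} g(w) d*w = (σ_{n−1}/σ_n) · ∫_{S^{n-1}} ∫_ℝ g( (θ + t e_{n+1}) / √(1+t²) ) · (1 + t²)^{−(n+1)/2} dt d*θ, where d*w and d*θ are the normalized (probability) surface measures on S^n and S^{n-1} respectively, and the equality holds in [0,∞]. (This is the case k = n−1 of the paper's transition formula between integration over the affine Grassmannian A_{n,k}, parametrized here by (θ,t) ↦ the hyperplane θ^⊥ + tθ lifted to the linear hyperplane of ℝ^{n+1} with unit normal (θ + t e_{n+1})/√(1+t²), and integration over the compact Grassmannian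 G_{n+1,k+1}.) -/
open MeasureTheory Metric Real
open scoped ENNReal NNReal

noncomputable section

/-- `σ_m = 2π^{(m+1)/2}/Γ((m+1)/2)`, the surface area of the unit sphere `S^m`. -/
def sphereArea (m : ℕ) : ℝ :=
  2 * Real.pi ^ (((m : ℝ) + 1) / 2) / Real.Gamma (((m : ℝ) + 1) / 2)

/-- The canonical embedding `ℝ^n → ℝ^{n+1} = ℝ^n ⊕ ℝ e_{n+1}` (last coordinate zero). -/
def emb (n : ℕ) (x : EuclideanSpace ℝ (Fin n)) : EuclideanSpace ℝ (Fin (n + 1)) :=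
  (WithLp.equiv 2 (Fin (n + 1) → ℝ)).symm (Fin.snoc ((WithLp.equiv 2 (Fin n → ℝ)) x) 0)

/-!
Extended to the unit ball constantly along rays, a function on the unit sphere of `F = E × ℝ` has
Haar integral `1 / dim F` times its integral over the sphere. Writing the points of `E × ℝ` as
`r • (θ, t)` with `‖θ‖ = 1` and `0 < r`, Fubini computes the same integral in terms of `θ` and `t`:
the volume element is `r ^ dim E dr dt dθ`, and the ray through `(θ, t)` stays in the ball for
`r < ‖(θ, t)‖⁻¹`, so that integrating out `r` leaves the weight `‖(θ, t)‖⁻¹ ^ dim F / dim F`.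
-/

open Module

variable {E F : Type*}

lemma lintegral_eq_ofReal_abs_mul_lintegral_comp_mul_left {r : ℝ} (hr : r ≠ 0) (f : ℝ → ℝ≥0∞) :
    ∫⁻ s, f s = ENNReal.ofReal |r| * ∫⁻ t, f (r * t) := by
  have hmap : ∫⁻ s, f s ∂(volume.map (r * ·)) = ∫⁻ t, f (r * t) :=
    lintegral_map_equiv f (Homeomorph.mulLeft₀ r hr).toMeasurableEquiv
  rw [← hmap, ← smul_eq_mul, ← lintegral_smul_measure, Real.smul_map_volume_mul_left hr]

lemma lintegral_ofReal_mul_volumeIoiPow (k : ℕ) {f : Set.Ioi (0 : ℝ) → ℝ≥0∞} (hf : Measurable f) :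
    ∫⁻ r, ENNReal.ofReal r * f r ∂(Measure.volumeIoiPow k) =
      ∫⁻ r, f r ∂(Measure.volumeIoiPow (k + 1)) := by
  unfold Measure.volumeIoiPow
  rw [lintegral_withDensity_eq_lintegral_mul _ (by fun_prop) (by fun_prop),
    lintegral_withDensity_eq_lintegral_mul _ (by fun_prop) hf]
  refine lintegral_congr fun r => ?_
  have hr : 0 < (r : ℝ) := r.2
  simp only [Pi.mul_apply]
  rw [← mul_assoc, ← ENNReal.ofReal_mul (by positivity), pow_succ]

section ConeExtension

variable [NormedAddCommGroup F] [NormedSpace ℝ F]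

/-- The extension of `g` from the unit sphere to the open unit ball that is constant along rays,
and zero outside the ball. It turns integrals over the sphere into Haar integrals, up to a
constant. At the origin `‖0‖⁻¹ = 0` gives it the value `g 0`. -/
def coneExtension (g : F → ℝ≥0∞) : F → ℝ≥0∞ :=
  (ball 0 1).indicator fun x => g (‖x‖⁻¹ • x)

lemma measurable_coneExtension [MeasurableSpace F] [BorelSpace F] {g : F → ℝ≥0∞}
    (hg : Measurable g) : Measurable (coneExtension g) :=
  (hg.comp (by fun_prop)).indicator measurableSet_ball

lemma coneExtension_smul (g : F → ℝ≥0∞) {v : F} (hv : v ≠ 0) {r : ℝ} (hr : 0 < r) :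
    coneExtension g (r • v) = (Set.Iio ‖v‖⁻¹).indicator (fun _ => g (‖v‖⁻¹ • v)) r := by
  have hv' : 0 < ‖v‖ := norm_pos_iff.2 hv
  have hnorm : ‖r • v‖ = r * ‖v‖ := by rw [norm_smul, Real.norm_of_nonneg hr.le]
  have hdir : ‖r • v‖⁻¹ • r • v = ‖v‖⁻¹ • v := by
    rw [hnorm, smul_smul]
    congr 1
    field_simp
  have hmem : r • v ∈ ball (0 : F) 1 ↔ r ∈ Set.Iio ‖v‖⁻¹ := by
    rw [mem_ball_zero_iff, hnorm, Set.mem_Iio, ← one_div, lt_div_iff₀ hv']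
  simp only [coneExtension, Set.indicator, hmem, hdir]

lemma lintegral_coneExtension_smul (k : ℕ) (g : F → ℝ≥0∞) {v : F} (hv : v ≠ 0) :
    ∫⁻ r : Set.Ioi (0 : ℝ), coneExtension g ((r : ℝ) • v) ∂(Measure.volumeIoiPow k) =
      g (‖v‖⁻¹ • v) * ENNReal.ofReal (‖v‖⁻¹ ^ (k + 1)) * ENNReal.ofReal (1 / (k + 1)) := by
  let ρ : Set.Ioi (0 : ℝ) := ⟨‖v‖⁻¹, Set.mem_Ioi.2 (inv_pos.2 (norm_pos_iff.2 hv))⟩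
  calc _ = ∫⁻ r, (Set.Iio ρ).indicator (fun _ => g (‖v‖⁻¹ • v)) r ∂(Measure.volumeIoiPow k) :=
        lintegral_congr fun r => coneExtension_smul g hv r.2
    _ = _ := by
        rw [lintegral_indicator_const measurableSet_Iio, Measure.volumeIoiPow_apply_Iio, mul_assoc,
          ← ENNReal.ofReal_mul (by positivity), mul_one_div]

end ConeExtension

section PolarCoordinates

variable [NormedAddCommGroup E] [NormedSpace ℝ E] [FiniteDimensional ℝ E] [Nontrivial E]
  [MeasurableSpace E] [BorelSpace E] (μ : Measure E) [μ.IsAddHaarMeasure]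
  [NormedAddCommGroup F] [NormedSpace ℝ F] [MeasurableSpace F] [BorelSpace F]
  {ν : Measure F} [ν.IsAddHaarMeasure]

lemma lintegral_eq_lintegral_toSphere_volumeIoiPow {f : E → ℝ≥0∞} (hf : Measurable f) :
    ∫⁻ x, f x ∂μ = ∫⁻ θ : sphere (0 : E) 1, ∫⁻ r : Set.Ioi (0 : ℝ), f ((r : ℝ) • (θ : E))
      ∂(Measure.volumeIoiPow (finrank ℝ E - 1)) ∂μ.toSphere := by
  have hpolar : Measurable fun p : sphere (0 : E) 1 × Set.Ioi (0 : ℝ) =>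
      f ((p.2 : ℝ) • (p.1 : E)) := hf.comp (by fun_prop)
  calc ∫⁻ x, f x ∂μ
      = ∫⁻ x : ({0}ᶜ : Set E), f x ∂(μ.comap (↑)) := by
        rw [lintegral_subtype_comap (measurableSet_singleton _).compl, restrict_compl_singleton]
    _ = ∫⁻ p : sphere (0 : E) 1 × Set.Ioi (0 : ℝ), f ((p.2 : ℝ) • (p.1 : E))
          ∂(μ.toSphere.prod (Measure.volumeIoiPow (finrank ℝ E - 1))) := by
        rw [← μ.measurePreserving_homeomorphUnitSphereProd.lintegral_comp hpolar]
        refine lintegral_congr fun x => ?_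
        have hx : ‖(x : E)‖ ≠ 0 := norm_ne_zero_iff.2 x.2
        simp [smul_smul, mul_inv_cancel₀ hx]
    _ = _ := lintegral_prod _ hpolar.aemeasurable

lemma lintegral_coneExtension {g : E → ℝ≥0∞} (hg : Measurable g) :
    ∫⁻ x, coneExtension g x ∂μ =
      (∫⁻ w : sphere (0 : E) 1, g w ∂μ.toSphere) * ENNReal.ofReal (1 / finrank ℝ E) := by
  rw [lintegral_eq_lintegral_toSphere_volumeIoiPow μ (measurable_coneExtension hg),
    ← lintegral_mul_const' _ _ ENNReal.ofReal_ne_top]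
  refine lintegral_congr fun w => ?_
  rw [lintegral_coneExtension_smul _ _ (ne_zero_of_mem_unit_sphere w), norm_eq_of_mem_sphere w,
    Nat.cast_pred finrank_pos]
  simp

/-- The slope `t` replaces the height `s = r * t`, whose Jacobian `r` raises the power of the
radial weight from `finrank ℝ E - 1` to `finrank ℝ E`. -/
lemma lintegral_prod_real_eq_lintegral_toSphere_volumeIoiPow {f : E × ℝ → ℝ≥0∞}
    (hf : Measurable f) :
    ∫⁻ p, f p ∂(μ.prod volume) =
      ∫⁻ θ : sphere (0 : E) 1, ∫⁻ t : ℝ, ∫⁻ r : Set.Ioi (0 : ℝ), f ((r : ℝ) • ((θ : E), t))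
        ∂(Measure.volumeIoiPow (finrank ℝ E)) ∂volume ∂μ.toSphere := by
  rw [lintegral_prod _ hf.aemeasurable,
    lintegral_eq_lintegral_toSphere_volumeIoiPow μ hf.lintegral_prod_right']
  refine lintegral_congr fun θ => ?_
  have hray : Measurable fun p : Set.Ioi (0 : ℝ) × ℝ => f ((p.1 : ℝ) • ((θ : E), p.2)) :=
    hf.comp (by fun_prop)
  calc _ = ∫⁻ r : Set.Ioi (0 : ℝ), ENNReal.ofReal r * (∫⁻ t : ℝ, f ((r : ℝ) • ((θ : E), t)))
          ∂(Measure.volumeIoiPow (finrank ℝ E - 1)) := by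
        refine lintegral_congr fun r => ?_
        rw [lintegral_eq_ofReal_abs_mul_lintegral_comp_mul_left r.2.ne', abs_of_pos r.2]
        simp only [Prod.smul_mk, smul_eq_mul]
    _ = ∫⁻ r : Set.Ioi (0 : ℝ), (∫⁻ t : ℝ, f ((r : ℝ) • ((θ : E), t)))
          ∂(Measure.volumeIoiPow (finrank ℝ E)) := by
        rw [lintegral_ofReal_mul_volumeIoiPow _ hray.lintegral_prod_right',
          Nat.sub_add_cancel finrank_pos]
    _ = _ := lintegral_lintegral_swap hray.aemeasurable

variable {μ}

theorem lintegral_toSphere_of_measurePreserving (Φ : (E × ℝ) ≃L[ℝ] F)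
    (hΦ : MeasurePreserving Φ (μ.prod volume) ν) {g : F → ℝ≥0∞} (hg : Measurable g) :
    ∫⁻ w : sphere (0 : F) 1, g w ∂ν.toSphere =
      ∫⁻ θ : sphere (0 : E) 1, ∫⁻ t : ℝ, g (‖Φ (θ, t)‖⁻¹ • Φ (θ, t)) *
        ENNReal.ofReal (‖Φ (θ, t)‖⁻¹ ^ (finrank ℝ E + 1)) ∂volume ∂μ.toSphere := by
  have : FiniteDimensional ℝ F := Φ.toLinearEquiv.finiteDimensional
  have : Nontrivial F := Φ.injective.nontrivial
  have hdim : finrank ℝ F = finrank ℝ E + 1 := by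
    rw [← Φ.toLinearEquiv.finrank_eq, finrank_prod, finrank_self]
  have hΦ0 (θ : sphere (0 : E) 1) (t : ℝ) : Φ (θ, t) ≠ 0 := fun h =>
    ne_zero_of_mem_unit_sphere θ (congrArg Prod.fst (Φ.map_eq_zero_iff.1 h))
  have hcone := measurable_coneExtension hg
  have hc : ENNReal.ofReal (1 / finrank ℝ F) ≠ 0 :=
    (ENNReal.ofReal_pos.2 (one_div_pos.2 (Nat.cast_pos.2 finrank_pos))).ne'
  rw [← ENNReal.mul_left_inj hc ENNReal.ofReal_ne_top, ← lintegral_coneExtension ν hg,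
    ← hΦ.lintegral_comp hcone,
    lintegral_prod_real_eq_lintegral_toSphere_volumeIoiPow μ (f := fun p => coneExtension g (Φ p))
      (hcone.comp hΦ.measurable)]
  simp only [map_smul, lintegral_coneExtension_smul _ g (hΦ0 _ _), hdim,
    Nat.cast_add, Nat.cast_one, lintegral_mul_const' _ _ ENNReal.ofReal_ne_top]

end PolarCoordinates

section InnerProductSpace

lemma sphereArea_pos (m : ℕ) : 0 < sphereArea m := by
  have := Real.Gamma_pos_of_pos (s := ((m : ℝ) + 1) / 2) (by positivity)
  unfold sphereArea
  positivity

lemma succ_mul_sqrt_pi_pow_div_Gamma (m : ℕ) :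
    ((m + 1 : ℕ) : ℝ) * (√π ^ (m + 1) / Real.Gamma (((m + 1 : ℕ) : ℝ) / 2 + 1)) =
      sphereArea m := by
  have hΓ : Real.Gamma (((m : ℝ) + 1) / 2) ≠ 0 := (Real.Gamma_pos_of_pos (by positivity)).ne'
  have hpow : √π ^ (m + 1) = π ^ (((m : ℝ) + 1) / 2) := by
    rw [Real.sqrt_eq_rpow, ← Real.rpow_natCast, ← Real.rpow_mul Real.pi_pos.le]
    push_cast
    ring_nf
  unfold sphereArea
  rw [hpow]
  push_cast
  rw [Real.Gamma_add_one (by positivity)]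
  field_simp

variable [NormedAddCommGroup E] [InnerProductSpace ℝ E] [FiniteDimensional ℝ E] [Nontrivial E]
  [MeasurableSpace E] [BorelSpace E]
  [NormedAddCommGroup F] [InnerProductSpace ℝ F] [FiniteDimensional ℝ F]
  [MeasurableSpace F] [BorelSpace F]

lemma toSphere_univ_eq_ofReal_sphereArea :
    (volume : Measure E).toSphere Set.univ = ENNReal.ofReal (sphereArea (finrank ℝ E - 1)) := by
  rw [← succ_mul_sqrt_pi_pow_div_Gamma, Nat.sub_add_cancel finrank_pos,
    ENNReal.ofReal_mul (Nat.cast_nonneg _), ENNReal.ofReal_natCast, Measure.toSphere_apply_univ,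
    InnerProductSpace.volume_ball, ENNReal.ofReal_one, one_pow, one_mul]

lemma laverage_toSphere (f : sphere (0 : E) 1 → ℝ≥0∞) :
    ⨍⁻ θ, f θ ∂(volume : Measure E).toSphere =
      ENNReal.ofReal (sphereArea (finrank ℝ E - 1))⁻¹ *
        ∫⁻ θ, f θ ∂(volume : Measure E).toSphere := by
  rw [laverage_eq, toSphere_univ_eq_ofReal_sphereArea, ENNReal.div_eq_inv_mul,
    ENNReal.ofReal_inv_of_pos (sphereArea_pos _)]

theorem lintegral_toSphere_of_linearIsometryEquiv (e : WithLp 2 (E × ℝ) ≃ₗᵢ[ℝ] F)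
    {g : F → ℝ≥0∞} (hg : Measurable g) :
    ∫⁻ w : sphere (0 : F) 1, g w ∂(volume : Measure F).toSphere =
      ∫⁻ θ : sphere (0 : E) 1, ∫⁻ t : ℝ,
        g ((1 + t ^ 2) ^ (-(1 : ℝ) / 2) • e (WithLp.toLp 2 ((θ : E), t))) *
          ENNReal.ofReal (1 + t ^ 2) ^ (-((finrank ℝ E : ℝ) + 1) / 2)
        ∂volume ∂(volume : Measure E).toSphere := by
  let Φ : (E × ℝ) ≃L[ℝ] F :=
    (WithLp.prodContinuousLinearEquiv 2 ℝ E ℝ).symm.trans e.toContinuousLinearEquiv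
  have hΦ : MeasurePreserving Φ (volume.prod volume) volume :=
    e.measurePreserving.comp (WithLp.volume_preserving_toLp E ℝ)
  have hnorm (θ : sphere (0 : E) 1) (t : ℝ) : ‖Φ (θ, t)‖⁻¹ = (1 + t ^ 2) ^ (-(1 : ℝ) / 2) := by
    change ‖e (WithLp.toLp 2 ((θ : E), t))‖⁻¹ = _
    rw [e.norm_map, WithLp.prod_norm_eq_of_L2, neg_div, Real.rpow_neg (by positivity),
      Real.sqrt_eq_rpow]
    simp
  have hweight (t : ℝ) : ENNReal.ofReal (((1 + t ^ 2) ^ (-(1 : ℝ) / 2)) ^ (finrank ℝ E + 1)) =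
      ENNReal.ofReal (1 + t ^ 2) ^ (-((finrank ℝ E : ℝ) + 1) / 2) := by
    have ht : 0 < 1 + t ^ 2 := by positivity
    rw [ENNReal.ofReal_rpow_of_pos ht, ← Real.rpow_mul_natCast ht.le]
    push_cast
    ring_nf
  rw [lintegral_toSphere_of_measurePreserving Φ hΦ hg]
  simp only [hnorm, hweight]
  rfl

theorem stmt18_general (e : WithLp 2 (E × ℝ) ≃ₗᵢ[ℝ] F) {g : F → ℝ≥0∞} (hg : Measurable g) :
    ⨍⁻ w : sphere (0 : F) 1, g w ∂(volume : Measure F).toSphere =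
      ENNReal.ofReal (sphereArea (finrank ℝ E - 1) / sphereArea (finrank ℝ E)) *
        ⨍⁻ θ : sphere (0 : E) 1, ∫⁻ t : ℝ,
          g ((1 + t ^ 2) ^ (-(1 : ℝ) / 2) • e (WithLp.toLp 2 ((θ : E), t))) *
            ENNReal.ofReal (1 + t ^ 2) ^ (-((finrank ℝ E : ℝ) + 1) / 2)
          ∂volume ∂(volume : Measure E).toSphere := by
  have : Nontrivial F := e.injective.nontrivial
  have hdim : finrank ℝ F - 1 = finrank ℝ E := by
    rw [← e.toLinearEquiv.finrank_eq, (WithLp.linearEquiv 2 ℝ (E × ℝ)).finrank_eq, finrank_prod,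
      finrank_self, Nat.add_sub_cancel]
  have harea := sphereArea_pos (finrank ℝ E - 1)
  rw [laverage_toSphere, laverage_toSphere, hdim,
    lintegral_toSphere_of_linearIsometryEquiv e hg, ← mul_assoc,
    ← ENNReal.ofReal_mul (div_nonneg harea.le (sphereArea_pos _).le), div_mul_eq_mul_div,
    mul_inv_cancel₀ harea.ne', one_div]

end InnerProductSpace

section Emb

lemma lintegral_sphMeasure (n : ℕ) (f : sphere (0 : EuclideanSpace ℝ (Fin n)) 1 → ℝ≥0∞) :
    ∫⁻ θ, f θ ∂(sphMeasure n) =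
      ⨍⁻ θ, f θ ∂(volume : Measure (EuclideanSpace ℝ (Fin n))).toSphere :=
  rfl

lemma emb_add (n : ℕ) (x y : EuclideanSpace ℝ (Fin n)) : emb n (x + y) = emb n x + emb n y := by
  ext i
  refine Fin.lastCases ?_ (fun j => ?_) i <;> simp [emb]

lemma emb_smul (n : ℕ) (r : ℝ) (x : EuclideanSpace ℝ (Fin n)) : emb n (r • x) = r • emb n x := by
  ext i
  refine Fin.lastCases ?_ (fun j => ?_) i <;> simp [emb]

lemma norm_emb_add_smul_single_last (n : ℕ) (x : EuclideanSpace ℝ (Fin n)) (t : ℝ) :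
    ‖emb n x + t • EuclideanSpace.single (Fin.last n) (1 : ℝ)‖ = √(‖x‖ ^ 2 + t ^ 2) := by
  rw [EuclideanSpace.norm_eq, EuclideanSpace.norm_sq_eq, Fin.sum_univ_castSucc]
  simp [emb]

/-- The isometric identification `ℝ^n ⊕ ℝ e_{n+1} = ℝ^{n+1}`, sending `(x, t)` to
`x + t e_{n+1}`. The `L²` product `WithLp 2` makes the two summands orthogonal. -/
def embProdIsometry (n : ℕ) :
    WithLp 2 (EuclideanSpace ℝ (Fin n) × ℝ) ≃ₗᵢ[ℝ] EuclideanSpace ℝ (Fin (n + 1)) :=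
  LinearIsometry.toLinearIsometryEquiv
    { toFun p := emb n p.fst + p.snd • EuclideanSpace.single (Fin.last n) 1
      map_add' p q := by
        simp only [WithLp.add_fst, WithLp.add_snd, emb_add, add_smul, add_add_add_comm]
      map_smul' r p := by
        simp only [WithLp.smul_fst, WithLp.smul_snd, emb_smul, smul_add, smul_assoc,
          RingHom.id_apply]
      norm_map' p := by
        change ‖emb n p.fst + p.snd • EuclideanSpace.single (Fin.last n) (1 : ℝ)‖ = ‖p‖
        rw [norm_emb_add_smul_single_last, WithLp.prod_norm_eq_of_L2, Real.norm_eq_abs, sq_abs] }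
    (by rw [(WithLp.linearEquiv 2 ℝ _).finrank_eq, finrank_prod, finrank_euclideanSpace_fin,
      finrank_euclideanSpace_fin, finrank_self])

lemma embProdIsometry_toLp (n : ℕ) (x : EuclideanSpace ℝ (Fin n)) (t : ℝ) :
    embProdIsometry n (WithLp.toLp 2 (x, t)) =
      emb n x + t • EuclideanSpace.single (Fin.last n) 1 :=
  rfl

end Emb

/-- Transition formula between integration over the affine Grassmannian `A_{n,n-1}`,
parametrized by `(θ,t) ↦ θ^⊥ + tθ`, lifted to the linear hyperplane of `ℝ^{n+1}` with unit
normal `(θ + t e_{n+1})/√(1+t²)`, and integration over the sphere `S^n` (case `k = n-1`). -/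
theorem stmt18 (n : ℕ) (hn : 2 ≤ n)
    (g : EuclideanSpace ℝ (Fin (n + 1)) → ℝ≥0∞) (hg : Measurable g) :
    (∫⁻ w, g (w : EuclideanSpace ℝ (Fin (n + 1))) ∂(sphMeasure (n + 1))) =
      ENNReal.ofReal (sphereArea (n - 1) / sphereArea n) *
        ∫⁻ θ, ∫⁻ t : ℝ,
          g (((1 + t ^ 2) ^ (-(1 : ℝ) / 2)) •
              (emb n (θ : EuclideanSpace ℝ (Fin n)) +
                t • EuclideanSpace.single (Fin.last n) 1)) *
            ENNReal.ofReal (1 + t ^ 2) ^ (-((n : ℝ) + 1) / 2) ∂volume ∂(sphMeasure n) := by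
  have : Nonempty (Fin n) := ⟨⟨0, by omega⟩⟩
  simpa only [lintegral_sphMeasure, embProdIsometry_toLp, finrank_euclideanSpace_fin] using
    stmt18_general (embProdIsometry n) hg
end
end

section
/- Let S ⊆ ℝ^n be a Borel measurable set and let 1 ≤ p < n/(n−1) be real. Set ω₀ = π^{(n−1)/(2p′)} · (Γ(n/2)/Γ(1/2))^{1/p} · Γ((n/p − n + 1)/2) / Γ(n/(2p)). Then ∫_{S^{n-1}} ∫_ℝ ( V_{n-1}(S ∩ (θ^⊥ + tθ)) )^p |t|^{−(n−1)(p−1)} dt d*θ ≤ ω₀^p · V_n(S), the inequality holding in [0,∞]. (Case k = n−1 of the paper's Corollary giving an unweighted-right-hand-side volume estimate for cross-sections: ∫_{A_{n,k}} [V_k(S∩τ)]^p |τ|^{−k(p−1)} dτ ≤ ω_{k,p,0}(n)^p V_n(S) for 1 ≤ p < n/k.) -/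
/-!
On the hyperplane `θ^⊥ + tθ`, Hölder's inequality with weight `|x|^b` bounds `(Rf)^p` by the
slice integral of `f^p |x|^(b(p-1))` times a power of the slice integral of `|x|^(-b)`, which is an
explicit multiple of `|t|^(n-1-b)`. As `t = ⟨x, θ⟩` on the slice, integrating over `t` reassembles
an integral over the whole space, and exchanging it with the average over `θ` leaves the spherical
mean of `|⟨x, θ⟩|^q`, an explicit multiple of `|x|^q`. The choice `b = n/p + μ` makes the two
Gamma quotients coincide, and they combine to `ω^p`.
-/

open MeasureTheory Metric Real
open scoped ENNReal NNReal

noncomputable section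

/-- `V_{n-1}(S ∩ (θ^⊥ + tθ))`: the (n-1)-dimensional Lebesgue measure, computed in `θ^⊥`,
of the section of `S` by the affine hyperplane `θ^⊥ + tθ`. -/
def sectVol (n : ℕ) (S : Set (EuclideanSpace ℝ (Fin n)))
    (θ : sphere (0 : EuclideanSpace ℝ (Fin n)) 1) (t : ℝ) : ℝ≥0∞ :=
  volume {y : ((ℝ ∙ (θ : EuclideanSpace ℝ (Fin n)))ᗮ) |
    t • (θ : EuclideanSpace ℝ (Fin n)) + (y : EuclideanSpace ℝ (Fin n)) ∈ S}

section Integrals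

open Module

theorem lintegral_ofReal_of_integral_pos {α : Type*} [MeasurableSpace α] {μ : Measure α}
    {f : α → ℝ} (hf : 0 ≤ᵐ[μ] f) (h : 0 < ∫ x, f x ∂μ) :
    ∫⁻ x, ENNReal.ofReal (f x) ∂μ = ENNReal.ofReal (∫ x, f x ∂μ) :=
  (ofReal_integral_eq_lintegral_ofReal (.of_integral_ne_zero h.ne') hf).symm

theorem lintegral_rpow_le_lintegral_rpow_mul_weight {α : Type*} [MeasurableSpace α]
    {μ : Measure α} {f w : α → ℝ≥0∞} (hf : AEMeasurable f μ) (hw : AEMeasurable w μ)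
    (hw0 : ∀ x, w x ≠ 0) (hw_top : ∀ x, w x ≠ ∞) {p : ℝ} (hp : 1 ≤ p) :
    (∫⁻ x, f x ∂μ) ^ p ≤ (∫⁻ x, f x ^ p * w x ^ (p - 1) ∂μ) * (∫⁻ x, (w x)⁻¹ ∂μ) ^ (p - 1) := by
  have hp0 : 0 < p := by linarith
  have hsplit : ∀ x, f x = (f x ^ p * w x ^ (p - 1)) ^ (1 / p) * (w x)⁻¹ ^ (1 - 1 / p) := by
    intro x
    rw [ENNReal.mul_rpow_of_nonneg _ _ (by positivity), ← ENNReal.rpow_mul, ← ENNReal.rpow_mul,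
      ← ENNReal.rpow_neg_one, ← ENNReal.rpow_mul, mul_assoc,
      ← ENNReal.rpow_add _ _ (hw0 x) (hw_top x), mul_one_div_cancel hp0.ne',
      show (p - 1) * (1 / p) + -1 * (1 - 1 / p) = 0 by field_simp; ring, ENNReal.rpow_one,
      ENNReal.rpow_zero, mul_one]
  have holder := ENNReal.lintegral_mul_norm_pow_le (μ := μ) (p := 1 / p) (q := 1 - 1 / p)
    ((hf.pow_const p).mul (hw.pow_const (p - 1))) hw.inv (by positivity)
    (sub_nonneg.2 ((div_le_one hp0).2 hp)) (by ring)
  calc (∫⁻ x, f x ∂μ) ^ p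
      = (∫⁻ x, (f x ^ p * w x ^ (p - 1)) ^ (1 / p) * (w x)⁻¹ ^ (1 - 1 / p) ∂μ) ^ p := by
        simp_rw [← hsplit]
    _ ≤ ((∫⁻ x, f x ^ p * w x ^ (p - 1) ∂μ) ^ (1 / p) *
          (∫⁻ x, (w x)⁻¹ ∂μ) ^ (1 - 1 / p)) ^ p := ENNReal.rpow_le_rpow holder hp0.le
    _ = _ := by
        rw [ENNReal.mul_rpow_of_nonneg _ _ hp0.le, ← ENNReal.rpow_mul, ← ENNReal.rpow_mul,
          one_div_mul_cancel hp0.ne', ENNReal.rpow_one, sub_mul, one_mul,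
          one_div_mul_cancel hp0.ne']

theorem lintegral_rpow_mul_exp_neg_rpow {p q : ℝ} (hp : 0 < p) (hq : -1 < q) :
    ∫⁻ r in Set.Ioi (0 : ℝ), ENNReal.ofReal (r ^ q * exp (-r ^ p)) =
      ENNReal.ofReal (1 / p * Gamma ((q + 1) / p)) := by
  have : 0 < Gamma ((q + 1) / p) := Gamma_pos_of_pos (div_pos (by linarith) hp)
  rw [← integral_rpow_mul_exp_neg_rpow hp hq]
  refine lintegral_ofReal_of_integral_pos ?_ ?_
  · filter_upwards [ae_restrict_mem measurableSet_Ioi] with r hr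
    have : 0 < r := hr
    simp only [Pi.zero_apply]
    positivity
  · rw [integral_rpow_mul_exp_neg_rpow hp hq]
    positivity

theorem lintegral_rpow_mul_exp_neg_mul_Ioi {a r : ℝ} (ha : 0 < a) (hr : 0 < r) :
    ∫⁻ u in Set.Ioi (0 : ℝ), ENNReal.ofReal (u ^ (a - 1) * exp (-(r * u))) =
      ENNReal.ofReal (r ^ (-a) * Gamma a) := by
  have : 0 < Gamma a := Gamma_pos_of_pos ha
  have hint := integral_rpow_mul_exp_neg_mul_Ioi ha hr
  rw [one_div, inv_rpow hr.le, ← rpow_neg hr.le] at hint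
  rw [← hint]
  refine lintegral_ofReal_of_integral_pos ?_ (by rw [hint]; positivity)
  filter_upwards [ae_restrict_mem measurableSet_Ioi] with u hu
  have : 0 < u := hu
  simp only [Pi.zero_apply]
  positivity

theorem lintegral_exp_neg_sq_mul_enorm_rpow {q : ℝ} (hq : -1 < q) :
    ∫⁻ t : ℝ, ENNReal.ofReal (exp (-t ^ 2)) * ‖t‖ₑ ^ q =
      ENNReal.ofReal (Gamma ((q + 1) / 2)) := by
  have hint : ∫ t : ℝ, |t| ^ q * exp (-|t| ^ 2) = Gamma ((q + 1) / 2) := by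
    have hhalf := integral_rpow_mul_exp_neg_rpow two_pos hq
    simp only [rpow_two] at hhalf
    rw [integral_comp_abs (f := fun t ↦ t ^ q * exp (-t ^ 2)), hhalf]
    ring
  rw [← hint, ← lintegral_ofReal_of_integral_pos (.of_forall fun _ ↦ by positivity)
    (hint ▸ Gamma_pos_of_pos (by linarith))]
  refine lintegral_congr_ae ?_
  filter_upwards [Measure.ae_ne volume (0 : ℝ)] with t ht
  rw [enorm_eq_ofReal_abs, ENNReal.ofReal_rpow_of_pos (abs_pos.2 ht),
    ← ENNReal.ofReal_mul (by positivity), sq_abs, mul_comm]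

theorem lintegral_eq_lintegral_toSphere_Ioi {E : Type*} [NormedAddCommGroup E] [NormedSpace ℝ E]
    [FiniteDimensional ℝ E] [MeasurableSpace E] [BorelSpace E] [Nontrivial E] (μ : Measure E)
    [μ.IsAddHaarMeasure] {f : E → ℝ≥0∞} (hf : Measurable f) :
    ∫⁻ x, f x ∂μ = ∫⁻ θ, (∫⁻ r in Set.Ioi (0 : ℝ),
      ENNReal.ofReal (r ^ (finrank ℝ E - 1)) * f (r • (θ : E))) ∂μ.toSphere := by
  calc ∫⁻ x, f x ∂μ = ∫⁻ x : ({0}ᶜ : Set E), f x ∂(μ.comap Subtype.val) := by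
        rw [lintegral_subtype_comap (measurableSet_singleton _).compl, restrict_compl_singleton]
    _ = ∫⁻ z, f (z.2.1 • (z.1 : E)) ∂(μ.toSphere.prod (.volumeIoiPow (finrank ℝ E - 1))) := by
        rw [← μ.measurePreserving_homeomorphUnitSphereProd.lintegral_comp (by fun_prop)]
        refine lintegral_congr fun x ↦ ?_
        have hx : ‖(x : E)‖ ≠ 0 := norm_ne_zero_iff.2 x.2
        simp [smul_smul, hx]
    _ = _ := by
        rw [lintegral_prod _ (by fun_prop)]
        refine lintegral_congr fun θ ↦ ?_
        rw [Measure.volumeIoiPow, lintegral_withDensity_eq_lintegral_mul _ (by fun_prop)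
          (by fun_prop)]
        exact lintegral_subtype_comap measurableSet_Ioi
          (fun r : ℝ ↦ ENNReal.ofReal (r ^ (finrank ℝ E - 1)) * f (r • (θ : E)))

end Integrals

section InnerProductSpace

open Module

variable {E : Type*} [NormedAddCommGroup E] [InnerProductSpace ℝ E]

theorem norm_smul_add_sq_of_mem_orthogonal {e : E} (he : ‖e‖ = 1) (t : ℝ) (y : (ℝ ∙ e)ᗮ) :
    ‖t • e + (y : E)‖ ^ 2 = t ^ 2 + ‖y‖ ^ 2 := by
  have hy : inner ℝ e (y : E) = 0 := Submodule.mem_orthogonal_singleton_iff_inner_right.1 y.2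
  rw [norm_add_sq_real, inner_smul_left, hy, norm_smul, he]
  simp

theorem inner_smul_add_of_mem_orthogonal {e : E} (he : ‖e‖ = 1) (t : ℝ) (y : (ℝ ∙ e)ᗮ) :
    inner ℝ e (t • e + (y : E)) = t := by
  have hy : inner ℝ e (y : E) = 0 := Submodule.mem_orthogonal_singleton_iff_inner_right.1 y.2
  rw [inner_add_right, inner_smul_right, hy, real_inner_self_eq_norm_sq, he]
  simp

theorem smul_add_ne_zero_of_mem_orthogonal {e : E} (he : ‖e‖ = 1) {t : ℝ} (ht : t ≠ 0)
    (y : (ℝ ∙ e)ᗮ) : t • e + (y : E) ≠ 0 := fun h ↦ by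
  simpa [h, ht.symm] using inner_smul_add_of_mem_orthogonal he t y

variable [FiniteDimensional ℝ E]

theorem cast_finrank_orthogonal_span_singleton {e : E} (he : e ≠ 0) :
    (finrank ℝ (ℝ ∙ e)ᗮ : ℝ) = finrank ℝ E - 1 := by
  rw [← (ℝ ∙ e).finrank_add_finrank_orthogonal, finrank_span_singleton he]
  push_cast
  ring

variable [MeasurableSpace E] [BorelSpace E]

theorem lintegral_exp_neg_mul_sq_norm {b : ℝ} (hb : 0 < b) :
    ∫⁻ v : E, ENNReal.ofReal (exp (-b * ‖v‖ ^ 2)) =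
      ENNReal.ofReal ((π / b) ^ (finrank ℝ E / 2 : ℝ)) := by
  rw [← GaussianFourier.integral_rexp_neg_mul_sq_norm hb]
  refine lintegral_ofReal_of_integral_pos (.of_forall fun _ ↦ (exp_pos _).le) ?_
  rw [GaussianFourier.integral_rexp_neg_mul_sq_norm hb]
  positivity

-- Writing `Γ(s) (T + |y|²)^(-s)` as `∫ u^(s-1) exp(-(T + |y|²) u) du` makes the integral Gaussian.
theorem Gamma_mul_lintegral_add_sq_norm_rpow_neg {s T : ℝ} (hs : (finrank ℝ E / 2 : ℝ) < s)
    (hT : 0 < T) :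
    ENNReal.ofReal (Gamma s) * ∫⁻ y : E, ENNReal.ofReal ((T + ‖y‖ ^ 2) ^ (-s)) =
      ENNReal.ofReal (π ^ (finrank ℝ E / 2 : ℝ) *
        (T ^ (-(s - finrank ℝ E / 2)) * Gamma (s - finrank ℝ E / 2))) := by
  set d : ℝ := finrank ℝ E / 2 with hd
  have hs0 : 0 < s := lt_of_le_of_lt (by positivity) hs
  have gaussian : ∀ u ∈ Set.Ioi (0 : ℝ),
      ∫⁻ y : E, ENNReal.ofReal (u ^ (s - 1) * exp (-((T + ‖y‖ ^ 2) * u))) =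
        ENNReal.ofReal (π ^ d) * ENNReal.ofReal (u ^ (s - d - 1) * exp (-(T * u))) := by
    intro u hu
    have hu : 0 < u := hu
    have hfactor : ∀ y : E, ENNReal.ofReal (u ^ (s - 1) * exp (-((T + ‖y‖ ^ 2) * u))) =
        ENNReal.ofReal (u ^ (s - 1) * exp (-(T * u))) *
          ENNReal.ofReal (exp (-u * ‖y‖ ^ 2)) := by
      intro y
      rw [← ENNReal.ofReal_mul (by positivity), mul_assoc, ← exp_add]
      ring_nf
    simp only [hfactor]
    rw [lintegral_const_mul _ (by fun_prop), lintegral_exp_neg_mul_sq_norm hu,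
      ← ENNReal.ofReal_mul (by positivity), ← ENNReal.ofReal_mul (by positivity), ← hd,
      div_rpow pi_pos.le hu.le, show s - d - 1 = s - 1 - d by ring, rpow_sub hu (s - 1) d]
    congr 1
    ring
  calc _ = ∫⁻ y : E, ∫⁻ u in Set.Ioi (0 : ℝ),
        ENNReal.ofReal (u ^ (s - 1) * exp (-((T + ‖y‖ ^ 2) * u))) := by
        rw [← lintegral_const_mul _ (by fun_prop)]
        refine lintegral_congr fun y ↦ ?_
        rw [lintegral_rpow_mul_exp_neg_mul_Ioi hs0 (by positivity),
          ← ENNReal.ofReal_mul (Gamma_pos_of_pos hs0).le, mul_comm]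
    _ = ∫⁻ u in Set.Ioi (0 : ℝ), ∫⁻ y : E,
        ENNReal.ofReal (u ^ (s - 1) * exp (-((T + ‖y‖ ^ 2) * u))) := by
        rw [lintegral_lintegral_swap]
        fun_prop
    _ = _ := by
        rw [setLIntegral_congr_fun measurableSet_Ioi gaussian, lintegral_const_mul _ (by fun_prop),
          lintegral_rpow_mul_exp_neg_mul_Ioi (sub_pos.2 hs) hT,
          ← ENNReal.ofReal_mul (by positivity)]

theorem lintegral_add_sq_norm_rpow_neg {s T : ℝ} (hs : (finrank ℝ E / 2 : ℝ) < s) (hT : 0 < T) :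
    ∫⁻ y : E, ENNReal.ofReal ((T + ‖y‖ ^ 2) ^ (-s)) =
      ENNReal.ofReal (π ^ (finrank ℝ E / 2 : ℝ) *
        (Gamma (s - finrank ℝ E / 2) / Gamma s) * T ^ (-(s - finrank ℝ E / 2))) := by
  have hΓ : 0 < Gamma s := Gamma_pos_of_pos (lt_of_le_of_lt (by positivity) hs)
  rw [← ENNReal.mul_right_inj (ENNReal.ofReal_pos.2 hΓ).ne' ENNReal.ofReal_ne_top,
    Gamma_mul_lintegral_add_sq_norm_rpow_neg hs hT, ← ENNReal.ofReal_mul hΓ.le]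
  congr 1
  field_simp

end InnerProductSpace

section RadonTransform

open Module

variable {E : Type*} [NormedAddCommGroup E] [InnerProductSpace ℝ E] [FiniteDimensional ℝ E]
  [MeasurableSpace E] [BorelSpace E]

/-- The hyperplane Radon transform on a Euclidean space `E`, at the hyperplane `e^⊥ + te`; it is
`Radon` when `E = EuclideanSpace ℝ (Fin n)`. The normal `e` ranges over `E` so that
rotation-invariant arguments need no coercions from the sphere; only `‖e‖ = 1` is meaningful. -/
def radonTransform (f : E → ℝ≥0∞) (e : E) (t : ℝ) : ℝ≥0∞ :=
  ∫⁻ y : (ℝ ∙ e)ᗮ, f (t • e + (y : E))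

theorem lintegral_radonTransform {e : E} (he : ‖e‖ = 1) {f : E → ℝ≥0∞} (hf : Measurable f) :
    ∫⁻ t : ℝ, radonTransform f e t = ∫⁻ x, f x := by
  have hsum := ((ℝ ∙ e).orthogonalDecomposition.symm.measurePreserving).comp
    (WithLp.volume_preserving_toLp (ℝ ∙ e) (ℝ ∙ e)ᗮ)
  have hline := (LinearIsometryEquiv.toSpanUnitSingleton (𝕜 := ℝ) e he).measurePreserving
  have hfm := hf.comp hsum.measurable
  symm
  calc ∫⁻ x, f x = ∫⁻ z : (ℝ ∙ e) × (ℝ ∙ e)ᗮ,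
        (f ∘ (ℝ ∙ e).orthogonalDecomposition.symm ∘ WithLp.toLp 2) z :=
        (hsum.lintegral_comp hf).symm
    _ = ∫⁻ t : ℝ, radonTransform f e t := by
        rw [Measure.volume_eq_prod, lintegral_prod _ hfm.aemeasurable,
          ← hline.lintegral_comp (Measurable.lintegral_prod_right' hfm)]
        refine lintegral_congr fun t ↦ lintegral_congr fun y ↦ ?_
        simp [LinearIsometryEquiv.toSpanUnitSingleton]

theorem radonTransform_mul_comp_inner {e : E} (he : ‖e‖ = 1) {f : E → ℝ≥0∞} (hf : Measurable f)
    (h : ℝ → ℝ≥0∞) (t : ℝ) :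
    radonTransform (fun x ↦ f x * h (inner ℝ e x)) e t = radonTransform f e t * h t := by
  simp only [radonTransform, inner_smul_add_of_mem_orthogonal he]
  exact lintegral_mul_const _ (by fun_prop)

theorem radonTransform_exp_neg_sq_norm {e : E} (he : ‖e‖ = 1) (t : ℝ) :
    radonTransform (fun v ↦ ENNReal.ofReal (exp (-‖v‖ ^ 2))) e t =
      ENNReal.ofReal (π ^ ((finrank ℝ E - 1) / 2 : ℝ)) * ENNReal.ofReal (exp (-t ^ 2)) := by
  have hgauss := lintegral_exp_neg_mul_sq_norm (E := (ℝ ∙ e)ᗮ) one_pos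
  rw [cast_finrank_orthogonal_span_singleton (norm_ne_zero_iff.1 (by simp [he])), div_one] at hgauss
  simp only [radonTransform, norm_smul_add_sq_of_mem_orthogonal he, neg_add, exp_add,
    ENNReal.ofReal_mul (exp_pos _).le]
  rw [lintegral_const_mul _ (by fun_prop), ← hgauss, mul_comm]
  simp only [neg_one_mul]

theorem radonTransform_enorm_rpow_neg {e : E} (he : ‖e‖ = 1) {b : ℝ}
    (hb : (finrank ℝ E : ℝ) - 1 < b) {t : ℝ} (ht : t ≠ 0) :
    radonTransform (fun x ↦ ‖x‖ₑ ^ (-b)) e t =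
      ENNReal.ofReal (π ^ ((finrank ℝ E - 1) / 2 : ℝ) *
        (Gamma ((b - finrank ℝ E + 1) / 2) / Gamma (b / 2))) *
        ‖t‖ₑ ^ ((finrank ℝ E : ℝ) - 1 - b) := by
  have hdim := cast_finrank_orthogonal_span_singleton (norm_ne_zero_iff.1 (by simp [he] : ‖e‖ ≠ 0))
  have hnorm : ∀ y : (ℝ ∙ e)ᗮ, ‖t • e + (y : E)‖ₑ ^ (-b) =
      ENNReal.ofReal ((t ^ 2 + ‖y‖ ^ 2) ^ (-(b / 2))) := by
    intro y
    have hpos := norm_pos_iff.2 (smul_add_ne_zero_of_mem_orthogonal he ht y)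
    rw [← ofReal_norm, ENNReal.ofReal_rpow_of_pos hpos,
      ← norm_smul_add_sq_of_mem_orthogonal he, ← rpow_natCast, ← rpow_mul hpos.le]
    congr 2
    push_cast
    ring
  simp only [radonTransform, hnorm]
  rw [lintegral_add_sq_norm_rpow_neg (by rw [hdim]; linarith) (by positivity), hdim,
    ENNReal.ofReal_mul' (by positivity), enorm_eq_ofReal_abs,
    ENNReal.ofReal_rpow_of_pos (abs_pos.2 ht), ← sq_abs, ← rpow_natCast,
    ← rpow_mul (abs_nonneg t)]
  congr 4 <;> (push_cast; ring_nf)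

theorem radonTransform_rpow_le {e : E} (he : ‖e‖ = 1) {f : E → ℝ≥0∞} (hf : Measurable f)
    {p b : ℝ} (hp : 1 ≤ p) {t : ℝ} (ht : t ≠ 0) :
    radonTransform f e t ^ p ≤ radonTransform (fun x ↦ f x ^ p * ‖x‖ₑ ^ (b * (p - 1))) e t *
      radonTransform (fun x ↦ ‖x‖ₑ ^ (-b)) e t ^ (p - 1) := by
  have hx : ∀ y : (ℝ ∙ e)ᗮ, ‖t • e + (y : E)‖ₑ ≠ 0 := fun y ↦
    enorm_ne_zero.2 (smul_add_ne_zero_of_mem_orthogonal he ht y)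
  simp only [radonTransform, ENNReal.rpow_mul, ENNReal.rpow_neg]
  exact lintegral_rpow_le_lintegral_rpow_mul_weight (by fun_prop) (by fun_prop)
    (fun y ↦ (ENNReal.rpow_pos (pos_iff_ne_zero.2 (hx y)) enorm_ne_top).ne')
    (fun y ↦ ENNReal.rpow_ne_top_of_ne_zero (hx y) enorm_ne_top) hp

theorem lintegral_radonTransform_rpow_mul_le {e : E} (he : ‖e‖ = 1) {f : E → ℝ≥0∞}
    (hf : Measurable f) {p b : ℝ} (hp : 1 ≤ p) (hb : (finrank ℝ E : ℝ) - 1 < b) (c : ℝ) :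
    ∫⁻ t : ℝ, radonTransform f e t ^ p * ‖t‖ₑ ^ c ≤
      ENNReal.ofReal (π ^ ((finrank ℝ E - 1) / 2 : ℝ) *
        (Gamma ((b - finrank ℝ E + 1) / 2) / Gamma (b / 2))) ^ (p - 1) *
      ∫⁻ x, f x ^ p * ‖x‖ₑ ^ (b * (p - 1)) *
        ‖inner ℝ e x‖ₑ ^ (((finrank ℝ E : ℝ) - 1 - b) * (p - 1) + c) := by
  set C := ENNReal.ofReal (π ^ ((finrank ℝ E - 1) / 2 : ℝ) *
    (Gamma ((b - finrank ℝ E + 1) / 2) / Gamma (b / 2)))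
  rw [← lintegral_radonTransform he (by fun_prop), ← lintegral_const_mul' _ _
    (ENNReal.rpow_ne_top_of_nonneg (sub_nonneg.2 hp) ENNReal.ofReal_ne_top)]
  refine lintegral_mono_ae ?_
  filter_upwards [Measure.ae_ne volume (0 : ℝ)] with t ht
  set g : E → ℝ≥0∞ := fun x ↦ f x ^ p * ‖x‖ₑ ^ (b * (p - 1))
  calc radonTransform f e t ^ p * ‖t‖ₑ ^ c
      ≤ radonTransform g e t * (C * ‖t‖ₑ ^ ((finrank ℝ E : ℝ) - 1 - b)) ^ (p - 1) * ‖t‖ₑ ^ c := by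
        rw [← radonTransform_enorm_rpow_neg he hb ht]
        gcongr
        exact radonTransform_rpow_le he hf hp ht
    _ = C ^ (p - 1) * (radonTransform g e t *
          ‖t‖ₑ ^ (((finrank ℝ E : ℝ) - 1 - b) * (p - 1) + c)) := by
        rw [ENNReal.mul_rpow_of_nonneg _ _ (sub_nonneg.2 hp), ← ENNReal.rpow_mul,
          ENNReal.rpow_add _ _ (enorm_ne_zero.2 ht) enorm_ne_top]
        ring
    _ = _ := by
        rw [radonTransform_mul_comp_inner he (by fun_prop)
          (fun r ↦ ‖r‖ₑ ^ (((finrank ℝ E : ℝ) - 1 - b) * (p - 1) + c))]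

end RadonTransform

section SphericalMean

open Module

variable {E : Type*} [NormedAddCommGroup E] [InnerProductSpace ℝ E] [FiniteDimensional ℝ E]
  [MeasurableSpace E] [BorelSpace E]

theorem lintegral_exp_neg_sq_norm_mul_homogeneous [Nontrivial E] {g : E → ℝ≥0∞}
    (hg : Measurable g) {q : ℝ} (hq : -(finrank ℝ E : ℝ) < q)
    (hom : ∀ r : ℝ, 0 < r → ∀ v, g (r • v) = ENNReal.ofReal (r ^ q) * g v) :
    ∫⁻ v, ENNReal.ofReal (exp (-‖v‖ ^ 2)) * g v =
      (∫⁻ θ, g (θ : E) ∂(volume : Measure E).toSphere) *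
        ENNReal.ofReal (1 / 2 * Gamma ((finrank ℝ E + q) / 2)) := by
  rw [lintegral_eq_lintegral_toSphere_Ioi _ (by fun_prop), ← lintegral_mul_const _ (by fun_prop)]
  refine lintegral_congr fun θ ↦ ?_
  have hcast : ((finrank ℝ E - 1 : ℕ) : ℝ) = finrank ℝ E - 1 := by
    rw [Nat.cast_sub finrank_pos, Nat.cast_one]
  rw [show (finrank ℝ E + q) / 2 = (finrank ℝ E - 1 + q + 1) / 2 by ring,
    ← lintegral_rpow_mul_exp_neg_rpow two_pos (by linarith), ← lintegral_const_mul _ (by fun_prop)]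
  refine setLIntegral_congr_fun measurableSet_Ioi fun r hr ↦ ?_
  have hr : 0 < r := hr
  have hθ : ‖r • (θ : E)‖ = r := by simp [norm_smul, hr.le]
  simp only [hom r hr, hθ, rpow_two]
  rw [← rpow_natCast, hcast, rpow_add hr, ENNReal.ofReal_mul (by positivity),
    ENNReal.ofReal_mul (by positivity)]
  ring

theorem volume_toSphere_univ [Nontrivial E] :
    (volume : Measure E).toSphere Set.univ =
      ENNReal.ofReal (2 * π ^ (finrank ℝ E / 2 : ℝ) / Gamma (finrank ℝ E / 2)) := by
  have hdim : (0 : ℝ) < finrank ℝ E := Nat.cast_pos.2 finrank_pos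
  rw [Measure.toSphere_apply_univ, InnerProductSpace.volume_ball, ENNReal.ofReal_one, one_pow,
    one_mul, ← ENNReal.ofReal_natCast, ← ENNReal.ofReal_mul hdim.le,
    Gamma_add_one (by positivity), sqrt_eq_rpow, ← rpow_mul_natCast pi_pos.le,
    one_div_mul_eq_div]
  congr 1
  field_simp

theorem lintegral_exp_neg_sq_norm_mul_enorm_inner_rpow {x : E} (hx : x ≠ 0) {q : ℝ}
    (hq : -1 < q) :
    ∫⁻ v, ENNReal.ofReal (exp (-‖v‖ ^ 2)) * ‖inner ℝ x v‖ₑ ^ q =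
      ‖x‖ₑ ^ q * ENNReal.ofReal (π ^ ((finrank ℝ E - 1) / 2 : ℝ) * Gamma ((q + 1) / 2)) := by
  set e : E := ‖x‖⁻¹ • x
  have he : ‖e‖ = 1 := norm_smul_inv_norm hx
  have hxe : x = ‖x‖ • e := by rw [smul_inv_smul₀ (norm_ne_zero_iff.2 hx)]
  have hinner : ∀ v, ‖inner ℝ x v‖ₑ ^ q = ‖x‖ₑ ^ q * ‖inner ℝ e v‖ₑ ^ q := by
    intro v
    conv_lhs => rw [hxe]
    rw [real_inner_smul_left, enorm_mul, enorm_norm,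
      ENNReal.mul_rpow_of_ne_top enorm_ne_top enorm_ne_top]
  have hslice : ∀ t, radonTransform
      (fun v ↦ ENNReal.ofReal (exp (-‖v‖ ^ 2)) * ‖inner ℝ e v‖ₑ ^ q) e t =
        ENNReal.ofReal (π ^ ((finrank ℝ E - 1) / 2 : ℝ)) *
          (ENNReal.ofReal (exp (-t ^ 2)) * ‖t‖ₑ ^ q) := by
    intro t
    rw [radonTransform_mul_comp_inner he (by fun_prop) (fun r ↦ ‖r‖ₑ ^ q),
      radonTransform_exp_neg_sq_norm he, mul_assoc]
  simp only [hinner, mul_left_comm _ (‖x‖ₑ ^ q)]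
  rw [lintegral_const_mul _ (by fun_prop), ← lintegral_radonTransform he (by fun_prop)]
  simp only [hslice]
  rw [lintegral_const_mul _ (by fun_prop), lintegral_exp_neg_sq_mul_enorm_rpow hq,
    ENNReal.ofReal_mul (by positivity)]

theorem lintegral_toSphere_enorm_inner_rpow {x : E} (hx : x ≠ 0) {q : ℝ} (hq : -1 < q) :
    ∫⁻ θ, ‖inner ℝ (θ : E) x‖ₑ ^ q ∂(volume : Measure E).toSphere =
      ENNReal.ofReal (2 * π ^ ((finrank ℝ E - 1) / 2 : ℝ) *
        (Gamma ((q + 1) / 2) / Gamma ((finrank ℝ E + q) / 2))) * ‖x‖ₑ ^ q := by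
  have : Nontrivial E := ⟨x, 0, hx⟩
  have hdim : (1 : ℝ) ≤ finrank ℝ E := Nat.one_le_cast.2 finrank_pos
  have hΓ : 0 < Gamma ((finrank ℝ E + q) / 2) := Gamma_pos_of_pos (by linarith)
  have hΓ_half : 0 < 1 / 2 * Gamma ((finrank ℝ E + q) / 2) := mul_pos one_half_pos hΓ
  have hpolar := lintegral_exp_neg_sq_norm_mul_homogeneous (g := fun v ↦ ‖inner ℝ x v‖ₑ ^ q)
    (by fun_prop) (by linarith : -(finrank ℝ E : ℝ) < q) fun r hr v ↦ by
      rw [real_inner_smul_right, enorm_mul, ENNReal.mul_rpow_of_ne_top enorm_ne_top enorm_ne_top,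
        enorm_of_nonneg hr.le, ENNReal.ofReal_rpow_of_pos hr]
  rw [lintegral_exp_neg_sq_norm_mul_enorm_inner_rpow hx hq] at hpolar
  simp only [real_inner_comm x]
  rw [← ENNReal.mul_left_inj (ENNReal.ofReal_pos.2 hΓ_half).ne' ENNReal.ofReal_ne_top,
    ← hpolar, mul_right_comm, ← ENNReal.ofReal_mul' hΓ_half.le, mul_comm]
  congr 2
  field_simp

theorem laverage_toSphere_enorm_inner_rpow {x : E} (hx : x ≠ 0) {q : ℝ} (hq : -1 < q) :
    ⨍⁻ θ, ‖inner ℝ (θ : E) x‖ₑ ^ q ∂(volume : Measure E).toSphere =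
      ENNReal.ofReal (Gamma (finrank ℝ E / 2) / Gamma (1 / 2) *
        (Gamma ((q + 1) / 2) / Gamma ((finrank ℝ E + q) / 2))) * ‖x‖ₑ ^ q := by
  have : Nontrivial E := ⟨x, 0, hx⟩
  have hdim : (0 : ℝ) < finrank ℝ E := Nat.cast_pos.2 finrank_pos
  have hπ : π ^ (finrank ℝ E / 2 : ℝ) = π ^ ((finrank ℝ E - 1) / 2 : ℝ) * Gamma (1 / 2) := by
    rw [Gamma_one_half_eq, sqrt_eq_rpow, ← rpow_add pi_pos]
    ring_nf
  rw [laverage_eq, lintegral_toSphere_enorm_inner_rpow hx hq, volume_toSphere_univ,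
    ENNReal.mul_div_right_comm, ← ENNReal.ofReal_div_of_pos (by positivity), hπ]
  congr 2
  field_simp

theorem laverage_toSphere_lintegral_mul_enorm_inner_rpow [Nontrivial E] {g : E → ℝ≥0∞}
    (hg : Measurable g) {q : ℝ} (hq : -1 < q) :
    ⨍⁻ θ, (∫⁻ x, g x * ‖inner ℝ (θ : E) x‖ₑ ^ q) ∂(volume : Measure E).toSphere =
      ENNReal.ofReal (Gamma (finrank ℝ E / 2) / Gamma (1 / 2) *
        (Gamma ((q + 1) / 2) / Gamma ((finrank ℝ E + q) / 2))) * ∫⁻ x, g x * ‖x‖ₑ ^ q := by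
  rw [laverage, lintegral_lintegral_swap (by fun_prop), ← lintegral_const_mul _ (by fun_prop)]
  refine lintegral_congr_ae ?_
  filter_upwards [Measure.ae_ne volume (0 : E)] with x hx
  have hmean := laverage_toSphere_enorm_inner_rpow hx hq
  rw [laverage] at hmean
  rw [lintegral_const_mul _ (by fun_prop), hmean]
  ring

end SphericalMean

section RadonInequality

open Module

/-- The constant `ω_{k,p,μ}(n)` for hyperplanes, `k = n - 1`: the bound for the Radon transform
from `L^p` with weight `|x|^(μp)` to `L^p` with weight `|t|^(μp-(n-1)(p-1))`. -/
def radonConst (n p μ : ℝ) : ℝ :=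
  π ^ ((n - 1) * (1 - 1 / p) / 2) * (Gamma (n / 2) / Gamma (1 / 2)) ^ (1 / p) *
    Gamma ((n / p + μ - n + 1) / 2) / Gamma ((n / p + μ) / 2)

theorem radonConst_pos {n p μ : ℝ} (hn : 1 ≤ n) (hμ : n - 1 < n / p + μ) :
    0 < radonConst n p μ := by
  have : 0 < n := by linarith
  have : 0 < Gamma ((n / p + μ - n + 1) / 2) := Gamma_pos_of_pos (by linarith)
  have : 0 < Gamma ((n / p + μ) / 2) := Gamma_pos_of_pos (by linarith)
  unfold radonConst
  positivity

theorem radonConst_rpow {n p μ : ℝ} (hn : 1 ≤ n) (hp : 0 < p) (hμ : n - 1 < n / p + μ) :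
    radonConst n p μ ^ p =
      (π ^ ((n - 1) / 2) *
        (Gamma ((n / p + μ - n + 1) / 2) / Gamma ((n / p + μ) / 2))) ^ (p - 1) *
      (Gamma (n / 2) / Gamma (1 / 2) *
        (Gamma ((n / p + μ - n + 1) / 2) / Gamma ((n / p + μ) / 2))) := by
  have : 0 < n := by linarith
  rw [radonConst, mul_div_assoc]
  set A := Gamma ((n / p + μ - n + 1) / 2) / Gamma ((n / p + μ) / 2)
  have hA : 0 < A := div_pos (Gamma_pos_of_pos (by linarith)) (Gamma_pos_of_pos (by linarith))
  calc _ = π ^ ((n - 1) / 2 * (p - 1)) * (Gamma (n / 2) / Gamma (1 / 2)) * A ^ p := by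
        rw [mul_rpow (by positivity) hA.le, mul_rpow (by positivity) (by positivity),
          ← rpow_mul pi_pos.le, ← rpow_mul (by positivity), one_div_mul_cancel hp.ne', rpow_one]
        congr 3
        field_simp
    _ = _ := by
        rw [mul_rpow (by positivity) hA.le, ← rpow_mul pi_pos.le, rpow_sub_one hA.ne']
        field_simp

theorem ofReal_radonConst_rpow {n p μ : ℝ} (hn : 1 ≤ n) (hp : 0 < p) (hμ : n - 1 < n / p + μ) :
    ENNReal.ofReal (radonConst n p μ) ^ p =
      ENNReal.ofReal (π ^ ((n - 1) / 2) *
        (Gamma ((n / p + μ - n + 1) / 2) / Gamma ((n / p + μ) / 2))) ^ (p - 1) *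
      ENNReal.ofReal (Gamma (n / 2) / Gamma (1 / 2) *
        (Gamma ((n / p + μ - n + 1) / 2) / Gamma ((n / p + μ) / 2))) := by
  have : 0 < Gamma ((n / p + μ - n + 1) / 2) := Gamma_pos_of_pos (by linarith)
  have : 0 < Gamma ((n / p + μ) / 2) := Gamma_pos_of_pos (by linarith)
  rw [ENNReal.ofReal_rpow_of_pos (radonConst_pos hn hμ), radonConst_rpow hn hp hμ,
    ENNReal.ofReal_mul (by positivity), ENNReal.ofReal_rpow_of_pos (by positivity)]

theorem radonConst_zero (n p : ℝ) :
    radonConst n p 0 = π ^ ((n - 1) * (1 - 1 / p) / 2) *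
      (Gamma (n / 2) / Gamma (1 / 2)) ^ (1 / p) *
        Gamma ((n / p - n + 1) / 2) / Gamma (n / (2 * p)) := by
  rw [radonConst, add_zero, div_div n p 2, mul_comm p]

variable {E : Type*} [NormedAddCommGroup E] [InnerProductSpace ℝ E] [FiniteDimensional ℝ E]
  [MeasurableSpace E] [BorelSpace E] [Nontrivial E]

theorem stmt19_general {f : E → ℝ≥0∞} (hf : Measurable f) {p μ : ℝ} (hp : 1 ≤ p)
    (hμ : (finrank ℝ E : ℝ) - 1 < finrank ℝ E / p + μ) :
    ⨍⁻ θ, (∫⁻ t : ℝ, radonTransform f (θ : E) t ^ p *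
        ‖t‖ₑ ^ (μ * p - ((finrank ℝ E : ℝ) - 1) * (p - 1))) ∂(volume : Measure E).toSphere ≤
      ENNReal.ofReal (radonConst (finrank ℝ E) p μ) ^ p * ∫⁻ x, f x ^ p * ‖x‖ₑ ^ (μ * p) := by
  have hp0 : 0 < p := by linarith
  have hdim : (1 : ℝ) ≤ finrank ℝ E := Nat.one_le_cast.2 finrank_pos
  set n : ℝ := (finrank ℝ E : ℝ)
  set b : ℝ := n / p + μ with hb
  have hbp : b * p = n + μ * p := by rw [hb]; field_simp
  set A : ℝ := Gamma ((b - n + 1) / 2) / Gamma (b / 2) with hA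
  set g : E → ℝ≥0∞ := fun x ↦ f x ^ p * ‖x‖ₑ ^ (b * (p - 1))
  have hslice (θ : sphere (0 : E) 1) : ∫⁻ t : ℝ, radonTransform f (θ : E) t ^ p *
      ‖t‖ₑ ^ (μ * p - (n - 1) * (p - 1)) ≤ ENNReal.ofReal (π ^ ((n - 1) / 2) * A) ^ (p - 1) *
        ∫⁻ x, g x * ‖inner ℝ (θ : E) x‖ₑ ^ (b - n) := by
    convert lintegral_radonTransform_rpow_mul_le (norm_eq_of_mem_sphere θ) hf hp hμ
      (μ * p - (n - 1) * (p - 1)) using 6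
    linear_combination hbp
  have hmean := laverage_toSphere_lintegral_mul_enorm_inner_rpow (g := g) (by fun_prop)
    (by linarith : -1 < b - n)
  rw [add_sub_cancel, ← hA] at hmean
  have hweight : ∫⁻ x, g x * ‖x‖ₑ ^ (b - n) = ∫⁻ x, f x ^ p * ‖x‖ₑ ^ (μ * p) := by
    refine lintegral_congr_ae ?_
    filter_upwards [Measure.ae_ne volume (0 : E)] with x hx
    rw [mul_assoc, ← ENNReal.rpow_add _ _ (enorm_ne_zero.2 hx) enorm_ne_top]
    congr 2
    linear_combination hbp
  calc _ ≤ ⨍⁻ θ, ENNReal.ofReal (π ^ ((n - 1) / 2) * A) ^ (p - 1) *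
        (∫⁻ x, g x * ‖inner ℝ (θ : E) x‖ₑ ^ (b - n)) ∂(volume : Measure E).toSphere :=
        lintegral_mono hslice
    _ = ENNReal.ofReal (π ^ ((n - 1) / 2) * A) ^ (p - 1) *
        (ENNReal.ofReal (Gamma (n / 2) / Gamma (1 / 2) * A) *
          ∫⁻ x, f x ^ p * ‖x‖ₑ ^ (μ * p)) := by
        rw [← hweight, ← hmean, laverage, lintegral_const_mul' _ _
          (ENNReal.rpow_ne_top_of_nonneg (sub_nonneg.2 hp) ENNReal.ofReal_ne_top), laverage]
    _ = _ := by
        rw [ofReal_radonConst_rpow hdim hp0 hμ, mul_assoc]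

theorem sectVol_eq_radonTransform_indicator {n : ℕ} {S : Set (EuclideanSpace ℝ (Fin n))}
    (hS : MeasurableSet S) (θ : sphere (0 : EuclideanSpace ℝ (Fin n)) 1) (t : ℝ) :
    sectVol n S θ t = radonTransform (S.indicator 1) (θ : EuclideanSpace ℝ (Fin n)) t :=
  (lintegral_indicator_one (μ := volume) (hS.preimage (by fun_prop))).symm

theorem indicator_one_rpow {α : Type*} (S : Set α) {p : ℝ} (hp : 0 < p) (x : α) :
    S.indicator (1 : α → ℝ≥0∞) x ^ p = S.indicator 1 x := by
  by_cases hx : x ∈ S <;> simp [hx, hp]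

end RadonInequality

/-- Unweighted-right-hand-side volume estimate for hyperplane cross-sections
(case `k = n-1`, `μ = 0` of the weighted estimate): for `1 ≤ p < n/(n-1)`,
`∫∫ V_{n-1}(S ∩ (θ^⊥+tθ))^p |t|^{-(n-1)(p-1)} dt d*θ ≤ ω₀^p V_n(S)`. -/
theorem stmt19 (n : ℕ) (hn : 2 ≤ n) (S : Set (EuclideanSpace ℝ (Fin n)))
    (hS : MeasurableSet S) (p : ℝ) (hp : 1 ≤ p) (hp' : p < (n : ℝ) / ((n : ℝ) - 1)) (ω₀ : ℝ)
    (hω : ω₀ = Real.pi ^ (((n : ℝ) - 1) * (1 - 1 / p) / 2) *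
      (Real.Gamma ((n : ℝ) / 2) / Real.Gamma (1 / 2)) ^ (1 / p) *
      Real.Gamma (((n : ℝ) / p - n + 1) / 2) / Real.Gamma ((n : ℝ) / (2 * p))) :
    (∫⁻ θ, ∫⁻ t : ℝ, sectVol n S θ t ^ p *
        ENNReal.ofReal |t| ^ (-((n : ℝ) - 1) * (p - 1)) ∂volume ∂(sphMeasure n)) ≤
      ENNReal.ofReal ω₀ ^ p * volume S := by
  have hn1 : (0 : ℝ) < n - 1 := sub_pos.2 (Nat.one_lt_cast.2 hn)
  have hp0 : 0 < p := by linarith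
  have : NeZero n := ⟨by omega⟩
  have hμ : (n : ℝ) - 1 < n / p + 0 := by
    rwa [add_zero, lt_div_comm₀ hn1 hp0]
  have key := stmt19_general (E := EuclideanSpace ℝ (Fin n)) (measurable_one.indicator hS) hp
    (μ := 0) (by rwa [finrank_euclideanSpace_fin])
  simp only [finrank_euclideanSpace_fin, radonConst_zero, ← hω, indicator_one_rpow S hp0, zero_mul,
    zero_sub, ENNReal.rpow_zero, mul_one, lintegral_indicator_one hS,
    ← sectVol_eq_radonTransform_indicator hS, ← neg_mul, enorm_eq_ofReal_abs] at key
  exact key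
end
end
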